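/- Let n ≥ 7. Every transitive homomorphism ψ : B_n → Sym_{2n} is either cyclic or conjugate to one of the three Lin homomorphisms ρ_{L1}, ρ_{L2}, ρ_{L3} : B_n → Sym_{2n}. -/

import Mathlib

/-- The braid relations on `n-1` generators; generator `i : Fin (n-1)` stands for the
Artin generator `σ_{i+1}` (so the indexing is 0-based). The relations are
`σ_i σ_j = σ_j σ_i` for `|i-j| ≥ 2` and `σ_i σ_j σ_i = σ_j σ_i σ_j` for `|i-j| = 1`. -/
def braidRels (n : ℕ) : Set (FreeGroup (Fin (n - 1))) :=
  { r | ∃ i j : Fin (n - 1), ((i : ℕ) + 2 ≤ (j : ℕ) ∨ (j : ℕ) + 2 ≤ (i : ℕ)) ∧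
      r = FreeGroup.of i * FreeGroup.of j * (FreeGroup.of j * FreeGroup.of i)⁻¹ } ∪
  { r | ∃ i j : Fin (n - 1), (j : ℕ) = (i : ℕ) + 1 ∧
      r = FreeGroup.of i * FreeGroup.of j * FreeGroup.of i *
          (FreeGroup.of j * FreeGroup.of i * FreeGroup.of j)⁻¹ }

/-- The braid group `B_n`, given by the Artin presentation. -/
abbrev BraidGroup (n : ℕ) := PresentedGroup (braidRels n)

/-- The Artin generator `σ_{i+1}` of the braid group `B_n`, for `i : Fin (n-1)`. -/
def σ {n : ℕ} (i : Fin (n - 1)) : BraidGroup n := PresentedGroup.of i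

/-- A homomorphism to the symmetric group `Sym_k = Perm (Fin k)` is transitive if its
image acts transitively on the `k` points. -/
def IsTransitiveHom {G : Type*} [Group G] {k : ℕ} (φ : G →* Equiv.Perm (Fin k)) : Prop :=
  ∀ x y : Fin k, ∃ g : G, φ g x = y

/-- A homomorphism from `B_n` is cyclic if it sends all the generators `σ_1, …, σ_{n-1}`
to a single element. -/
def IsCyclicHom {n : ℕ} {H : Type*} [Group H] (ψ : BraidGroup n →* H) : Prop :=
  ∀ i j : Fin (n - 1), ψ (σ i) = ψ (σ j)

/-- The transposition `(j, n+j)` (0-based) in `Sym_{2n}`. -/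
def tw (n : ℕ) (j : Fin n) : Equiv.Perm (Fin (2 * n)) :=
  Equiv.swap ⟨j, by have := j.isLt; omega⟩ ⟨n + j, by have := j.isLt; omega⟩

/-- The 4-cycle `(a, b, c, d)` sending `a ↦ b ↦ c ↦ d ↦ a` (for pairwise distinct
points), written as the product of transpositions `(a d)(a c)(a b)`. -/
def cyc4 {m : ℕ} (a b c d : Fin m) : Equiv.Perm (Fin m) :=
  Equiv.swap a d * Equiv.swap a c * Equiv.swap a b

/-- `ρ_{L1}(σ_{i+1})`: the 4-cycle `(i, n+i+1, n+i, i+1)` on the 0-based points of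
`Sym_{2n}`, for `i : Fin (n-1)`. -/
def linL1Gen (n : ℕ) (i : Fin (n - 1)) : Equiv.Perm (Fin (2 * n)) :=
  cyc4 ⟨i, by have := i.isLt; omega⟩ ⟨n + i + 1, by have := i.isLt; omega⟩
    ⟨n + i, by have := i.isLt; omega⟩ ⟨(i : ℕ) + 1, by have := i.isLt; omega⟩

/-- The product `∏_{j < i} (j, n+j)` (0-based) in `Sym_{2n}`. -/
def lowTw (n : ℕ) (i : Fin (n - 1)) : Equiv.Perm (Fin (2 * n)) :=
  ((List.finRange n).map (fun j : Fin n => if (j : ℕ) < (i : ℕ) then tw n j else 1)).prod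

/-- The product `∏_{j ≥ i+2} (j, n+j)` (0-based) in `Sym_{2n}`. -/
def highTw (n : ℕ) (i : Fin (n - 1)) : Equiv.Perm (Fin (2 * n)) :=
  ((List.finRange n).map (fun j : Fin n => if (i : ℕ) + 2 ≤ (j : ℕ) then tw n j else 1)).prod

/-- `ρ_{L2}(σ_{i+1}) = ∏_{j<i}(j, n+j) · (i, n+i+1, n+i, i+1) · ∏_{j≥i+2}(j, n+j)`
(0-based) in `Sym_{2n}`. -/
def linL2Gen (n : ℕ) (i : Fin (n - 1)) : Equiv.Perm (Fin (2 * n)) :=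
  lowTw n i * linL1Gen n i * highTw n i

/-- `ρ_{L3}(σ_{i+1}) = ∏_{j<i}(j, n+j) · (i, n+i+1)(i+1, n+i) · ∏_{j≥i+2}(j, n+j)`
(0-based) in `Sym_{2n}`. -/
def linL3Gen (n : ℕ) (i : Fin (n - 1)) : Equiv.Perm (Fin (2 * n)) :=
  lowTw n i *
    (Equiv.swap ⟨i, by have := i.isLt; omega⟩ ⟨n + i + 1, by have := i.isLt; omega⟩ *
     Equiv.swap ⟨(i : ℕ) + 1, by have := i.isLt; omega⟩ ⟨n + i, by have := i.isLt; omega⟩) *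
  highTw n i

section
open Equiv Equiv.Perm
namespace LinBr

structure Br {G : Type} [Group G] (m : ℕ) (s : ℕ → G) : Prop where
  comm : ∀ i j, i + 2 ≤ j → j + 1 < m → s i * s j = s j * s i
  braid : ∀ i, i + 2 < m → s i * s (i+1) * s i = s (i+1) * s i * s (i+1)

theorem Br.shift {G : Type} [Group G] {m k : ℕ} {s : ℕ → G} (h : Br m s) (hk : k ≤ m) :
    Br (m - k) (fun i => s (i + k)) where
  comm i j h1 h2 := h.comm _ _ (by omega) (by omega)
  braid i h1 := by
    have := h.braid (i + k) (by omega)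
    rwa [show i + k + 1 = i + 1 + k by omega] at this

theorem Br.rev {G : Type} [Group G] {m : ℕ} {s : ℕ → G} (h : Br m s) :
    Br m (fun i => s (m - 2 - i)) where
  comm i j h1 h2 := (h.comm (m-2-j) (m-2-i) (by omega) (by omega)).symm
  braid i h1 := by
    have := h.braid (m - 2 - (i+1)) (by omega)
    rw [show m - 2 - (i+1) + 1 = m - 2 - i by omega] at this
    exact this.symm

theorem Br.mono {G : Type} [Group G] {m k : ℕ} {s : ℕ → G} (h : Br m s) (hk : k ≤ m) :
    Br k s where
  comm i j h1 h2 := h.comm i j h1 (by omega)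
  braid i h1 := h.braid i (by omega)

/-- The product `s 0 * ... * s (k-1)`. -/
def del {G : Type} [Group G] (s : ℕ → G) : ℕ → G
  | 0 => 1
  | k+1 => del s k * s k

theorem Br.del_comm {G : Type} [Group G] {m : ℕ} {s : ℕ → G} (h : Br m s) (k j : ℕ)
    (hk : k + 1 ≤ j) (hj : j + 1 < m) : del s k * s j = s j * del s k := by
  induction k with
  | zero => simp [del]
  | succ k ih =>
    have h1 := ih (by omega)
    have h2 := h.comm k j (by omega) hj
    simp only [del]
    rw [mul_assoc, h2, ← mul_assoc, h1, mul_assoc]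

theorem Br.del_shift {G : Type} [Group G] {m : ℕ} {s : ℕ → G} (h : Br m s) (k i : ℕ)
    (hk : k + 1 ≤ m) (hi : i + 1 < k) : del s k * s i = s (i+1) * del s k := by
  induction k with
  | zero => omega
  | succ k ih =>
    by_cases hik : i + 1 < k
    · have h1 := ih (by omega) hik
      have h2 := h.comm i k (by omega) (by omega)
      simp only [del]
      rw [mul_assoc, ← h2, ← mul_assoc, h1, mul_assoc]
    · obtain rfl : k = i + 1 := by omega
      simp only [del]
      have h1 := h.del_comm i (i+1) (by omega) (by omega)
      have h2 := h.braid i (by omega)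
      calc del s i * s i * s (i+1) * s i = del s i * (s i * s (i+1) * s i) := by group
        _ = del s i * s (i+1) * s i * s (i+1) := by rw [h2]; group
        _ = _ := by rw [h1]; group

theorem Br.exists_shift {G : Type} [Group G] {m : ℕ} {s : ℕ → G} (h : Br m s) :
    ∃ g : G, ∀ i, i + 2 < m → g * s i * g⁻¹ = s (i+1) := by
  refine ⟨del s (m-1), fun i hi => ?_⟩
  rw [h.del_shift (m-1) i (by omega) (by omega)]; group

/-- conjugating by `k` steps -/
theorem Br.exists_shiftk {G : Type} [Group G] {m : ℕ} {s : ℕ → G} (h : Br m s) (k : ℕ) :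
    ∃ g : G, ∀ i, i + k + 1 < m → g * s i * g⁻¹ = s (i+k) := by
  obtain ⟨g, hg⟩ := h.exists_shift
  induction k with
  | zero => exact ⟨1, by simp⟩
  | succ k ih =>
    obtain ⟨g', hg'⟩ := ih
    refine ⟨g * g', fun i hi => ?_⟩
    rw [show i + (k+1) = i + k + 1 by omega, ← hg (i+k) (by omega), ← hg' i (by omega)]
    group

section perm
variable {X : Type}

theorem conj_apply {g a b : Perm X} (h : g * a * g⁻¹ = b) (x : X) : b (g x) = g (a x) := by
  rw [← h]; simp

theorem Br.comm_apply {m : ℕ} {s : ℕ → Perm X} (h : Br m s) {i j : ℕ}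
    (hij : i + 2 ≤ j) (hj : j + 1 < m) (x : X) : s i (s j x) = s j (s i x) :=
  DFunLike.congr_fun (h.comm i j hij hj) x

theorem Br.braid_apply {m : ℕ} {s : ℕ → Perm X} (h : Br m s) {i : ℕ}
    (hi : i + 2 < m) (x : X) : s i (s (i+1) (s i x)) = s (i+1) (s i (s (i+1) x)) :=
  DFunLike.congr_fun (h.braid i hi) x

theorem eq_of_comm_braid {a b : Perm X} {U : Set X} (ha : ∀ x ∈ U, a x ∈ U)
    (hab : ∀ x ∈ U, a (b x) = b (a x))
    (hbr : ∀ x, a (b (a x)) = b (a (b x))) : ∀ x ∈ U, a x = b x := by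
  intro x hx
  have h1 := hbr x
  rw [hab _ (ha x hx), hab x hx] at h1
  have h2 := b.injective h1
  rw [← hab x hx] at h2
  exact a.injective h2

/-- propagate equality -/
theorem Br.propagate {m : ℕ} {s : ℕ → Perm X} (h : Br m s) {U : Set X}
    (hU : ∀ i, i + 1 < m → ∀ x ∈ U, s i x ∈ U) (h01 : ∀ x ∈ U, s 0 x = s 1 x) :
    ∀ i j, i + 1 < m → j + 1 < m → ∀ x ∈ U, s i x = s j x := by
  have key : ∀ i, i + 2 < m → ∀ x ∈ U, s i x = s (i+1) x := by
    intro i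
    induction i with
    | zero => intro _; exact h01
    | succ i ih =>
      intro hi
      have ih := ih (by omega)
      refine eq_of_comm_braid (hU _ (by omega)) ?_ (h.braid_apply (by omega))
      intro x hx
      rw [← ih _ (hU _ (by omega) x hx), ← ih x hx]
      exact h.comm_apply (by omega) (by omega) x
  have key0 : ∀ i, i + 1 < m → ∀ x ∈ U, s i x = s 0 x := by
    intro i
    induction i with
    | zero => simp
    | succ i ih =>
      intro hi x hx
      rw [← key i (by omega) x hx, ih (by omega) x hx]
  intro i j hi hj x hx
  rw [key0 i hi x hx, key0 j hj x hx]

end perm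

section cyc
variable {X : Type} [Fintype X] [DecidableEq X]

/-- cycles of `s` with length satisfying `p`. -/
def cyc (s : Perm X) (p : ℕ → Prop) [DecidablePred p] : Finset (Perm X) :=
  s.cycleFactorsFinset.filter (fun c => p c.support.card)

/-- the points lying on those cycles -/
def cpt (s : Perm X) (p : ℕ → Prop) [DecidablePred p] : Finset X :=
  (cyc s p).biUnion (fun c => c.support)

variable {s : Perm X} {p : ℕ → Prop} [DecidablePred p]

theorem cyc_isCycle {c : Perm X} (hc : c ∈ cyc s p) : c.IsCycle :=
  (mem_cycleFactorsFinset_iff.1 (Finset.mem_filter.1 hc).1).1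

theorem cyc_apply {c : Perm X} (hc : c ∈ cyc s p) {x : X} (hx : x ∈ c.support) : c x = s x :=
  (mem_cycleFactorsFinset_iff.1 (Finset.mem_filter.1 hc).1).2 x hx

theorem conj_mem_cyc {g : Perm X} (hg : g * s = s * g) {c : Perm X} (hc : c ∈ cyc s p) :
    g * c * g⁻¹ ∈ cyc s p := by
  unfold cyc at *
  rw [Finset.mem_filter] at *
  refine ⟨?_, by rw [card_support_conj]; exact hc.2⟩
  have := (mem_cycleFactorsFinset_conj s g c).2 hc.1
  rwa [show g * s * g⁻¹ = s by rw [hg]; group] at this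

theorem cpt_invariant {g : Perm X} (hg : g * s = s * g) {x : X} (hx : x ∈ cpt s p) :
    g x ∈ cpt s p := by
  unfold cpt at *
  rw [Finset.mem_biUnion] at *
  obtain ⟨c, hc, hx⟩ := hx
  exact ⟨_, conj_mem_cyc hg hc, by simpa [mem_support] using hx⟩

theorem cpt_card : (cpt s p).card = ∑ c ∈ cyc s p, c.support.card := by
  unfold cpt
  rw [Finset.card_biUnion]
  intro a ha b hb hab
  exact (cycleFactorsFinset_pairwise_disjoint s (Finset.mem_filter.1 ha).1
    (Finset.mem_filter.1 hb).1 hab).disjoint_support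

theorem cyc_card_le (k : ℕ) (hk : ∀ j, 2 ≤ j → p j → k ≤ j) :
    (cyc s p).card * k ≤ (cpt s p).card := by
  rw [cpt_card, ← smul_eq_mul]
  refine Finset.card_nsmul_le_sum _ _ _ fun c hc => ?_
  exact hk _ (cyc_isCycle hc).two_le_card_support (Finset.mem_filter.1 hc).2

theorem mem_cpt_iff {x : X} : x ∈ cpt s p ↔ s x ≠ x ∧ p (s.cycleOf x).support.card := by
  unfold cpt cyc
  simp only [Finset.mem_biUnion, Finset.mem_filter]
  constructor
  · rintro ⟨c, ⟨hc, hp⟩, hx⟩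
    have := cycle_is_cycleOf hx hc
    rw [← this]
    exact ⟨mem_support.1 (mem_cycleFactorsFinset_support_le hc hx), hp⟩
  · rintro ⟨h1, h2⟩
    refine ⟨s.cycleOf x, ⟨cycleOf_mem_cycleFactorsFinset_iff.2 (mem_support.2 h1), h2⟩, ?_⟩
    rw [mem_support_cycleOf_iff' h1]

/-- The conjugation permutation of the set of cycles. -/
def conjT {g : Perm X} (hg : g * s = s * g) : Perm (cyc s p) where
  toFun c := ⟨g * c * g⁻¹, conj_mem_cyc hg c.2⟩
  invFun c := ⟨g⁻¹ * c * g⁻¹⁻¹, conj_mem_cyc (by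
    rw [inv_mul_eq_iff_eq_mul, ← mul_assoc, hg]; group) c.2⟩
  left_inv c := by apply Subtype.ext; simp [mul_assoc]
  right_inv c := by apply Subtype.ext; simp [mul_assoc]

theorem comm_on_cycle {c u v : Perm X} (hc : c.IsCycle) (hu : u * c = c * u) (hv : v * c = c * v)
    {x : X} (hx : x ∈ c.support) : u (v x) = v (u x) := by
  have h0 : ∀ w : Perm X, w * c = c * w → ∃ k : ℤ, (c ^ k) x = w x := by
    intro w hw
    refine hc.exists_zpow_eq (mem_support.1 hx) ?_
    have : c (w x) = w (c x) := (DFunLike.congr_fun hw x).symm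
    rw [this]
    exact fun h => mem_support.1 hx (w.injective h)
  obtain ⟨k, hk⟩ := h0 u hu
  obtain ⟨l, hl⟩ := h0 v hv
  have e1 : ∀ w : Perm X, w * c = c * w → ∀ (k : ℤ) y, w ((c ^ k) y) = (c ^ k) (w y) := by
    intro w hw k y
    exact DFunLike.congr_fun ((show Commute w c from hw).zpow_right k) y
  rw [← hl, e1 u hu, ← hk, e1 v hv, ← hl, ← mul_apply, ← mul_apply, ← zpow_add, ← zpow_add,
    add_comm]

theorem agree_aux {a b d c : Perm X} (hc : c.IsCycle) (hda : d * a = a * d) (hdb : d * b = b * d)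
    (hbr : a * b * a = b * a * b) (h1 : a * c * a⁻¹ = d * c * d⁻¹)
    (h2 : b * c * b⁻¹ = d * c * d⁻¹) {x : X} (hx : x ∈ c.support) : a x = b x := by
  have hu : (d⁻¹ * a) * c = c * (d⁻¹ * a) := by
    calc (d⁻¹ * a) * c = d⁻¹ * (a * c * a⁻¹) * a := by group
      _ = _ := by rw [h1]; group
  have hv : (d⁻¹ * b) * c = c * (d⁻¹ * b) := by
    calc (d⁻¹ * b) * c = d⁻¹ * (b * c * b⁻¹) * b := by group
      _ = _ := by rw [h2]; group
  have hda' : Commute d⁻¹ a := (show Commute d a from hda).inv_left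
  have hdb' : Commute d⁻¹ b := (show Commute d b from hdb).inv_left
  have e1 : (d⁻¹ * a) * (d⁻¹ * b) * (d⁻¹ * a) = d⁻¹ * d⁻¹ * d⁻¹ * (a * b * a) := by
    have q1 : a * d⁻¹ = d⁻¹ * a := hda'.eq.symm
    have q2 : b * d⁻¹ = d⁻¹ * b := hdb'.eq.symm
    calc (d⁻¹ * a) * (d⁻¹ * b) * (d⁻¹ * a) = d⁻¹ * (a * d⁻¹) * (b * d⁻¹) * a := by group
      _ = d⁻¹ * d⁻¹ * a * d⁻¹ * b * a := by rw [q1, q2]; group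
      _ = d⁻¹ * d⁻¹ * (a * d⁻¹) * b * a := by group
      _ = _ := by rw [q1]; group
  have e2 : (d⁻¹ * b) * (d⁻¹ * a) * (d⁻¹ * b) = d⁻¹ * d⁻¹ * d⁻¹ * (b * a * b) := by
    have q1 : a * d⁻¹ = d⁻¹ * a := hda'.eq.symm
    have q2 : b * d⁻¹ = d⁻¹ * b := hdb'.eq.symm
    calc (d⁻¹ * b) * (d⁻¹ * a) * (d⁻¹ * b) = d⁻¹ * (b * d⁻¹) * (a * d⁻¹) * b := by group
      _ = d⁻¹ * d⁻¹ * b * d⁻¹ * a * b := by rw [q1, q2]; group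
      _ = d⁻¹ * d⁻¹ * (b * d⁻¹) * a * b := by group
      _ = _ := by rw [q2]; group
  have hinv : ∀ w : Perm X, w * c = c * w → ∀ x ∈ (c.support : Set X), w x ∈ (c.support : Set X) := by
    intro w hw x hx
    simp only [Finset.mem_coe, mem_support] at *
    have : c (w x) = w (c x) := (DFunLike.congr_fun hw x).symm
    rw [this]
    exact fun h => hx (w.injective h)
  have := eq_of_comm_braid (a := d⁻¹ * a) (b := d⁻¹ * b) (U := (c.support : Set X))
    (hinv _ hu) (fun x hx => comm_on_cycle hc hu hv hx)
    (fun x => DFunLike.congr_fun (by rw [e1, e2, hbr] :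
      (d⁻¹ * a) * (d⁻¹ * b) * (d⁻¹ * a) = (d⁻¹ * b) * (d⁻¹ * a) * (d⁻¹ * b)) x) x hx
  simpa using this

end cyc
end LinBr
end

section
open Equiv Equiv.Perm
namespace LinBr

/-- statement of Artin's lemma for `k` strands -/
def ArtinK (k : ℕ) : Prop := ∀ (Y : Type) [Fintype Y] [DecidableEq Y] (t : ℕ → Perm Y), Br k t →
    Fintype.card Y < k → ∀ i j, i + 1 < k → j + 1 < k → t i = t j

section cyc
variable {X : Type} [Fintype X] [DecidableEq X] {s : Perm X} {p : ℕ → Prop} [DecidablePred p]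

theorem conj_br {k : ℕ} {t : ℕ → Perm X} (ht : Br k t) (hs : ∀ i, i + 1 < k → t i * s = s * t i) :
    Br k (fun i => if h : i + 1 < k then (conjT (p := p) (hs i h)) else 1) where
  comm i j h1 h2 := by
    rw [dif_pos h2, dif_pos (show i + 1 < k by omega)]
    ext1 c
    apply Subtype.ext
    have := ht.comm i j h1 h2
    change t i * (t j * c * (t j)⁻¹) * (t i)⁻¹ = t j * (t i * c * (t i)⁻¹) * (t j)⁻¹
    calc _ = (t i * t j) * c * (t i * t j)⁻¹ := by group
      _ = _ := by rw [this]; group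
  braid i h1 := by
    rw [dif_pos (show i + 1 < k by omega), dif_pos (show i + 1 + 1 < k by omega)]
    ext1 c
    apply Subtype.ext
    have := ht.braid i h1
    change t i * (t (i+1) * (t i * c * (t i)⁻¹) * (t (i+1))⁻¹) * (t i)⁻¹ =
      t (i+1) * (t i * (t (i+1) * c * (t (i+1))⁻¹) * (t i)⁻¹) * (t (i+1))⁻¹
    calc _ = (t i * t (i+1) * t i) * c * (t i * t (i+1) * t i)⁻¹ := by group
      _ = _ := by rw [this]; group

theorem agree_cyc {k : ℕ} (hk : 5 ≤ k) (A : ArtinK k) {t : ℕ → Perm X} (ht : Br k t)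
    (hs : ∀ i, i + 1 < k → t i * s = s * t i) (hcard : (cyc s p).card < k) :
    ∀ i j, i + 1 < k → j + 1 < k → ∀ x ∈ cpt s p, t i x = t j x := by
  have B := A _ _ (conj_br (p := p) ht hs) (by simpa using hcard)
  have C : ∀ i j, i + 1 < k → j + 1 < k → ∀ c ∈ cyc s p, t i * c * (t i)⁻¹ = t j * c * (t j)⁻¹ := by
    intro i j hi hj c hc
    have := B i j hi hj
    simp only [dif_pos hi, dif_pos hj] at this
    exact congrArg Subtype.val (DFunLike.congr_fun this ⟨c, hc⟩)
  refine ht.propagate (U := (cpt s p : Set X)) (fun i hi x hx => cpt_invariant (hs i hi) hx) ?_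
  intro x hx
  obtain ⟨c, hc, hx⟩ := Finset.mem_biUnion.1 hx
  exact agree_aux (d := t 3) (cyc_isCycle hc) (ht.comm 0 3 (by omega) (by omega)).symm
    (ht.comm 1 3 (by omega) (by omega)).symm (ht.braid 0 (by omega))
    (C 0 3 (by omega) (by omega) c hc) (C 1 3 (by omega) (by omega) c hc) hx

theorem mem_cpt_true {x : X} (p : ℕ → Prop) [DecidablePred p] (hp : ∀ j, p j) :
    x ∈ cpt s p ↔ s x ≠ x := by
  rw [mem_cpt_iff]; simp [hp]

theorem small_agree (hX : Fintype.card X ≤ 5) {a b : Perm X} (ha : a * s = s * a)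
    (hb : b * s = s * b) (hbr : a * b * a = b * a * b) {x : X} (hx : s x ≠ x) : a x = b x := by
  have hx0 := hx
  rw [← mem_cpt_true (fun _ => True) (fun _ => trivial)] at hx
  have hc2 : (cyc s (fun _ => True)).card ≤ 2 := by
    have h1 := cyc_card_le (s := s) (p := fun _ => True) 2 (fun j h _ => h)
    have h2 := Finset.card_le_univ (cpt s (fun _ => True))
    omega
  set α : Perm (cyc s (fun _ => True)) := conjT ha with hα
  set β : Perm (cyc s (fun _ => True)) := conjT hb with hβ
  have hαβ : α * β * α = β * α * β := by
    ext1 c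
    apply Subtype.ext
    change a * (b * (a * c * a⁻¹) * b⁻¹) * a⁻¹ = b * (a * (b * c * b⁻¹) * a⁻¹) * b⁻¹
    calc _ = (a * b * a) * c * (a * b * a)⁻¹ := by group
      _ = _ := by rw [hbr]; group
  have hsq : ∀ g : Perm (cyc s (fun _ => True)), g * g = 1 := by
    intro g
    have h1 : g ^ (Fintype.card (Perm (cyc s (fun _ => True)))) = 1 := pow_card_eq_one
    rw [Fintype.card_perm, Fintype.card_coe] at h1
    have h2 : ((cyc s (fun _ => True)).card.factorial) ∣ 2 :=
      (Nat.factorial_dvd_factorial hc2).trans (by decide)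
    obtain ⟨k, hk⟩ := h2
    rw [← pow_two, hk, pow_mul, h1, one_pow]
  have heq : α = β := by
    have hinv : ∀ g : Perm (cyc s (fun _ => True)), g⁻¹ = g := fun g =>
      inv_eq_of_mul_eq_one_left (hsq g)
    have hcm : α * β = β * α := by
      rw [← hinv (α * β), mul_inv_rev, hinv, hinv]
    have e1 : α * β * α = β := by rw [hcm, mul_assoc, hsq, mul_one]
    have e2 : β * α * β = α := by rw [← hcm, mul_assoc, hsq, mul_one]
    rw [← e1, hαβ, e2]
  obtain ⟨c, hc, hx⟩ := Finset.mem_biUnion.1 hx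
  have h1 : a * c * a⁻¹ = b * c * b⁻¹ := by
    have h0 := congrArg Subtype.val (DFunLike.congr_fun heq ⟨c, hc⟩)
    exact h0
  by_cases hac : a * c * a⁻¹ = c
  · exact agree_aux (d := 1) (cyc_isCycle hc) (by simp) (by simp) hbr (by simpa using hac)
      (by simpa [← h1] using hac) hx
  by_contra hne
  set c' := a * c * a⁻¹ with hc'
  have hcm' : c' ∈ cyc s (fun _ => True) := conj_mem_cyc ha hc
  have h2 : a * c' * a⁻¹ = c := by
    have h0 := congrArg Subtype.val (DFunLike.congr_fun (hsq α) ⟨c, hc⟩)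
    exact h0
  have h3 : b * c' * b⁻¹ = c := by
    have h0 := congrArg Subtype.val (DFunLike.congr_fun (hsq β) ⟨c, hc⟩)
    rw [h1]
    exact h0
  have hcc : c'.support.card = c.support.card := card_support_conj
  have hdis : Disjoint c'.support c.support := (cycleFactorsFinset_pairwise_disjoint s
    (Finset.mem_filter.1 hcm').1 (Finset.mem_filter.1 hc).1 hac).disjoint_support
  have h2le := (cyc_isCycle hc).two_le_card_support
  have hcard : c.support.card = 2 := by
    have := Finset.card_union_of_disjoint hdis
    have := Finset.card_le_univ (c'.support ∪ c.support)
    omega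
  have mv : ∀ (g k l : Perm X), g * k * g⁻¹ = l → ∀ y ∈ k.support, g y ∈ l.support := by
    rintro g k l rfl y hy
    simpa [mem_support] using hy
  have two : ∀ k ∈ cyc s (fun _ => True), k.support.card = 2 → ∀ y ∈ k.support, ∀ z ∈ k.support,
      z = y ∨ z = s y := by
    intro k hk hk2 y hy z hz
    have h5 : s y ∈ k.support := by
      rw [← cyc_apply hk hy]; exact apply_mem_support.2 hy
    have h6 : s y ≠ y := by rw [← cyc_apply hk hy]; exact mem_support.1 hy
    by_contra hcon
    push Not at hcon
    have : ({y, s y, z} : Finset X) ⊆ k.support := by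
      intro w; simp only [Finset.mem_insert, Finset.mem_singleton]; rintro (rfl | rfl | rfl) <;> assumption
    have h7 := Finset.card_le_card this
    rw [Finset.card_eq_three.2 ⟨y, s y, z, h6.symm, hcon.1.symm, hcon.2.symm, rfl⟩] at h7
    omega
  have sy2 : ∀ k ∈ cyc s (fun _ => True), k.support.card = 2 → ∀ y ∈ k.support, s (s y) = y := by
    intro k hk hk2 y hy
    have h5 : s y ∈ k.support := by
      rw [← cyc_apply hk hy]; exact apply_mem_support.2 hy
    have h6 : s y ≠ y := by rw [← cyc_apply hk hy]; exact mem_support.1 hy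
    rcases two k hk hk2 _ h5 y hy with h | h
    · exact absurd h.symm h6
    · exact h.symm
  have hy : b x ∈ c'.support := mv b c c' h1.symm x hx
  have hax : a x ∈ c'.support := mv a c c' rfl x hx
  have hby : b (b x) ∈ c.support := mv b c' c h3 _ hy
  have hay : a (b x) ∈ c.support := mv a c' c h2 _ hy
  have e1 := (two c' hcm' (by omega) _ hy _ hax).resolve_left hne
  have e2 := two c hc hcard _ hx _ hby
  have e3 := two c hc hcard _ hx _ hay
  have e4 := sy2 c hc hcard _ hx
  have e5 := sy2 c' hcm' (by omega) _ hy
  have as : ∀ w, a (s w) = s (a w) := fun w => DFunLike.congr_fun ha w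
  have bs : ∀ w, b (s w) = s (b w) := fun w => DFunLike.congr_fun hb w
  have br : ∀ w, a (b (a w)) = b (a (b w)) := fun w => DFunLike.congr_fun hbr w
  have b1 := br x
  have b2 := br (b x)
  have hsy : s (b x) ≠ b x := fun h => hx0 (b.injective (by rw [bs]; exact h))
  rw [e1, bs, as] at b1
  rcases e2 with e2 | e2 <;> rcases e3 with e3 | e3 <;>
    simp only [e1, e2, e3, e4, e5, as, bs] at b1 b2 <;> grind
end cyc

section chain
variable {X : Type}

theorem Br.Z_lemma {m : ℕ} (hm : 5 ≤ m) {s : ℕ → Perm X} (h : Br m s) {Q0 Q1 : Set X}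
    (a0 : ∀ x ∈ Q0, s 0 x ∈ Q0) (b0 : ∀ x ∈ Q0, s (m-2) x ∈ Q0)
    (c0 : ∀ x ∈ Q0, ∀ j, 2 ≤ j → j + 1 < m → s j x = s (m-2) x)
    (a1 : ∀ x ∈ Q1, s 0 x ∈ Q1) (b1 : ∀ x ∈ Q1, s (m-2) x ∈ Q1)
    (c1 : ∀ x ∈ Q1, ∀ j, j + 3 < m → s j x = s 0 x) :
    (∀ i, i + 1 < m → ∀ x ∈ Q0 ∩ Q1, s i x ∈ Q0 ∩ Q1) ∧
    ∀ i j, i + 1 < m → j + 1 < m → ∀ x ∈ Q0 ∩ Q1, s i x = s j x := by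
  have H : ∀ i, i + 1 < m → ∀ x ∈ Q0 ∩ Q1, s i x ∈ Q0 ∩ Q1 := by
    rintro i hi x ⟨h0, h1⟩
    by_cases hi2 : 2 ≤ i
    · rw [c0 x h0 i hi2 hi]; exact ⟨b0 x h0, b1 x h1⟩
    · rw [c1 x h1 i (by omega)]; exact ⟨a0 x h0, a1 x h1⟩
  refine ⟨H, h.propagate H ?_⟩
  rintro x ⟨h0, h1⟩
  exact (c1 x h1 1 (by omega)).symm

theorem Br.far_disj {m : ℕ} (hm : 5 ≤ m) {s : ℕ → Perm X} (h : Br m s)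
    (h0 : ∀ j, 2 ≤ j → j + 1 < m → ∀ x, s 0 x ≠ x → s j x = x) :
    ∀ i j, i + 2 ≤ j → j + 1 < m → ∀ x, s i x ≠ x → s j x = x := by
  intro i j hij hj x hx
  obtain ⟨g, hg⟩ := h.exists_shiftk i
  have e0 := hg 0 (by omega)
  have e1 := hg (j - i) (by omega)
  rw [zero_add] at e0
  rw [show j - i + i = j by omega] at e1
  obtain ⟨y, rfl⟩ := g.surjective x
  rw [conj_apply e0] at hx
  rw [conj_apply e1, h0 (j-i) (by omega) (by omega) y (fun h => hx (by rw [h]))]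

theorem braid_move {a b : Perm X} (hbr : ∀ x, a (b (a x)) = b (a (b x))) {x : X} (ha : a x ≠ x)
    (hb : b x = x) : b (a x) ≠ a x := by
  intro h
  have := hbr x
  rw [hb, h] at this
  exact ha (a.injective this)

variable [Fintype X] [DecidableEq X]

theorem Br.chain {m : ℕ} (hm : 4 ≤ m) {s : ℕ → Perm X} (h : Br m s)
    (hf : ∀ i j, i + 2 ≤ j → j + 1 < m → ∀ x, s i x ≠ x → s j x = x) :
    ∃ o, (∀ i, i + 1 < m → (s i).support.card = 2 * o) ∧
      (∀ i, i + 2 < m → ((s i).support ∩ (s (i+1)).support).card = o) ∧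
      ((Finset.range (m-1)).biUnion (fun i => (s i).support)).card = m * o := by
  have hN : ∀ i, i + 1 < m → (s i).support.card = (s 0).support.card := by
    intro i hi
    obtain ⟨g, hg⟩ := h.exists_shiftk i
    have := hg 0 (by omega)
    rw [zero_add] at this
    rw [← this, card_support_conj]
  set N := (s 0).support.card
  have half : ∀ i, i + 2 < m → N ≤ 2 * ((s i).support ∩ (s (i+1)).support).card := by
    intro i hi
    have h1 : ((s i).support \ (s (i+1)).support).card ≤
        ((s i).support ∩ (s (i+1)).support).card := by
      refine Finset.card_le_card_of_injOn (s i) ?_ (s i).injective.injOn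
      intro x hx
      simp only [Finset.coe_sdiff, Set.mem_diff, Finset.mem_coe, mem_support, not_not] at hx
      simp only [Finset.coe_inter, Set.mem_inter_iff, Finset.mem_coe, mem_support]
      exact ⟨fun hh => hx.1 ((s i).injective hh), braid_move (h.braid_apply hi) hx.1 hx.2⟩
    have h2 := Finset.card_sdiff_add_card_inter (s i).support (s (i+1)).support
    rw [hN i (by omega)] at h2
    omega
  have adj : ∀ i, i + 3 < m → ((s i).support ∩ (s (i+1)).support).card +
      ((s (i+1)).support ∩ (s (i+2)).support).card ≤ N := by
    intro i hi
    rw [← hN (i+1) (by omega), ← Finset.card_union_of_disjoint]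
    · apply Finset.card_le_card
      intro x; simp only [Finset.mem_union, Finset.mem_inter]; tauto
    · rw [Finset.disjoint_left]
      intro x hx hx2
      simp only [Finset.mem_inter, mem_support] at hx hx2
      exact hx2.2 (hf i (i+2) le_rfl (by omega) x hx.1)
  have o2 : ∀ i, i + 2 < m → 2 * ((s i).support ∩ (s (i+1)).support).card = N := by
    intro i hi
    have h1 := half i hi
    by_cases h3 : i + 3 < m
    · have := adj i h3
      have h2 := half (i+1) (by omega)
      have e : i + 1 + 1 = i + 2 := rfl
      rw [e] at h2
      omega
    · obtain ⟨k, rfl⟩ : ∃ k, i = k + 1 := ⟨i - 1, by omega⟩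
      have := adj k (by omega)
      have h2 := half k (by omega)
      have e : k + 1 + 1 = k + 2 := rfl
      rw [e] at h1 ⊢
      omega
  refine ⟨((s 0).support ∩ (s 1).support).card, ?_, ?_, ?_⟩
  · intro i hi; rw [hN i hi, ← o2 0 (by omega)]
  · intro i hi
    have := o2 i hi
    have := o2 0 (by omega)
    rw [zero_add] at this
    omega
  · have key : ∀ k, k + 1 < m → 2 * ((Finset.range (k+1)).biUnion (fun i => (s i).support)).card
        = (k + 2) * N := by
      intro k
      induction k with
      | zero => intro _; simp [N]
      | succ k ih =>
        intro hk
        have ih := ih (by omega)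
        rw [Finset.range_add_one, Finset.biUnion_insert]
        have e1 := Finset.card_union_add_card_inter (s (k+1)).support
          ((Finset.range (k+1)).biUnion (fun i => (s i).support))
        have e2 : (s (k+1)).support ∩ ((Finset.range (k+1)).biUnion (fun i => (s i).support)) =
            (s k).support ∩ (s (k+1)).support := by
          ext x
          simp only [Finset.mem_inter, Finset.mem_biUnion, Finset.mem_range]
          constructor
          · rintro ⟨h1, i, hi, h2⟩
            refine ⟨?_, h1⟩
            by_cases hik : i = k
            · rwa [← hik]
            · exact absurd (hf i (k+1) (by omega) hk x (mem_support.1 h2)) (mem_support.1 h1)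
          · rintro ⟨h1, h2⟩
            exact ⟨h2, k, by omega, h1⟩
        rw [e2, hN (k+1) hk] at e1
        have e3 := o2 k (by omega)
        have e4 : (k + 1 + 2) * N = (k+2) * N + N := by ring
        omega
    have h1 := key (m-2) (by omega)
    rw [show m - 2 + 1 = m - 1 by omega, show m - 2 + 2 = m by omega] at h1
    have h2 := o2 0 (by omega)
    rw [zero_add] at h2
    rw [← h2] at h1
    have : m * (2 * ((s 0).support ∩ (s 1).support).card) =
      2 * (m * ((s 0).support ∩ (s 1).support).card) := by ring
    omega

end chain

/-- generators at distance at least two from the first agree on its support -/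
theorem good_of_artin {m : ℕ} (hm : 5 ≤ m) (IH : 7 ≤ m → ArtinK (m-2)) {X : Type} [Fintype X]
    [DecidableEq X] {s : ℕ → Perm X} (h : Br m s) (hX : Fintype.card X < m) :
    ∀ x, s 0 x ≠ x → ∀ j, 2 ≤ j → j + 1 < m → s j x = s (m-2) x := by
  intro x hx j hj hjm
  by_cases h7 : 7 ≤ m
  · have hsh := h.shift (k := 2) (by omega)
    have hx' := (mem_cpt_true (s := s 0) (fun _ => True) (fun _ => trivial)).2 hx
    have := agree_cyc (s := s 0) (p := fun _ => True) (by omega) (IH h7) hsh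
      (fun i hi => (h.comm 0 (i+2) (by omega) (by omega)).symm) (by
        have h1 := cyc_card_le (s := s 0) (p := fun _ => True) 2 (fun j h _ => h)
        have h2 := Finset.card_le_univ (cpt (s 0) (fun _ => True))
        omega) (j-2) (m-4) (by omega) (by omega) x hx'
    rwa [show j - 2 + 2 = j by omega, show m - 4 + 2 = m - 2 by omega] at this
  · have key : ∀ j, 2 ≤ j → j + 2 < m → s j x = s (j+1) x := by
      intro j hj hj2
      exact small_agree (s := s 0) (by omega) (h.comm 0 j (by omega) (by omega)).symm
        (h.comm 0 (j+1) (by omega) (by omega)).symm (h.braid j (by omega)) hx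
    obtain rfl | rfl : m = 5 ∨ m = 6 := by omega
    · obtain rfl | rfl : j = 2 ∨ j = 3 := by omega
      · exact key 2 (by omega) (by omega)
      · rfl
    · obtain rfl | rfl | rfl : j = 2 ∨ j = 3 ∨ j = 4 := by omega
      · exact (key 2 (by omega) (by omega)).trans (key 3 (by omega) (by omega))
      · exact key 3 (by omega) (by omega)
      · rfl

theorem artin (m : ℕ) (hm : 5 ≤ m) : ArtinK m := by
  induction m using Nat.strong_induction_on with
  | _ m IH =>
  intro X _ _ s h hX
  have IH' : 7 ≤ m → ArtinK (m-2) := fun h => IH _ (by omega) (by omega)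
  have g0 := good_of_artin hm IH' h hX
  have g1 := good_of_artin hm IH' h.rev hX
  simp only [Nat.sub_zero, Nat.sub_self] at g1
  set Q0 : Set X := {x | s 0 x ≠ x}
  set Q1 : Set X := {x | s (m-2) x ≠ x}
  have hcm : ∀ x, s 0 (s (m-2) x) = s (m-2) (s 0 x) := h.comm_apply (by omega) (by omega)
  obtain ⟨z1, z2⟩ := h.Z_lemma hm (Q0 := Q0) (Q1 := Q1)
    (fun x hx hh => hx ((s 0).injective hh))
    (fun x hx hh => hx (by
      rw [hcm] at hh; exact (s (m-2)).injective hh))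
    (fun x hx j h1 h2 => g0 x hx j h1 h2)
    (fun x hx hh => hx (by
      rw [← hcm] at hh; exact (s 0).injective hh))
    (fun x hx hh => hx ((s (m-2)).injective hh))
    (fun x hx j h1 => by
      have := g1 x hx (m-2-j) (by omega) (by omega)
      rwa [show m - 2 - (m-2-j) = j by omega] at this)
  set Z := Q0 ∩ Q1
  have hZ : ∀ i, i + 1 < m → ∀ x, s i x ∈ Z ↔ x ∈ Z := by
    intro i hi x
    refine ⟨fun hx => ?_, z1 i hi x⟩
    have h1 : Set.MapsTo (s i) Z Z := z1 i hi
    have h2 : Set.SurjOn (s i) Z Z := by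
      have h3 : (s i) '' Z = Z := Set.eq_of_subset_of_ncard_le (Set.image_subset_iff.2 h1)
        (by rw [Set.ncard_image_of_injective _ (s i).injective]) (Set.toFinite _)
      intro y hy; rwa [h3]
    obtain ⟨y, hy, hyx⟩ := h2 hx
    rwa [← (s i).injective hyx]
  classical
  let W := {x : X // x ∉ Z}
  let t : ℕ → Perm W := fun i => if hi : i + 1 < m then
    (s i).subtypePerm (p := fun x => x ∉ Z) (fun x => not_congr (hZ i hi x)) else 1
  have htv : ∀ i, i + 1 < m → ∀ x : W, ((t i x : W) : X) = s i x := by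
    intro i hi x
    simp only [t, dif_pos hi]; rfl
  have hBt : Br m t := by
    constructor
    · intro i j hij hj
      ext x
      simp only [mul_apply]
      rw [htv i (by omega), htv j hj, htv j hj, htv i (by omega)]
      exact h.comm_apply hij hj x
    · intro i hi
      ext x
      simp only [mul_apply]
      rw [htv i (by omega), htv (i+1) (by omega), htv i (by omega), htv (i+1) (by omega),
        htv i (by omega), htv (i+1) (by omega)]
      exact h.braid_apply hi x
  have hfar := hBt.far_disj hm (by
    intro j hj hjm x hx
    have hx' : s 0 x ≠ x := fun hh => hx (Subtype.ext (by rw [htv 0 (by omega)]; exact hh))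
    apply Subtype.ext
    rw [htv j hjm, g0 x hx' j hj hjm]
    by_contra hcon
    exact x.2 ⟨hx', hcon⟩)
  obtain ⟨o, ho, -, hU⟩ := hBt.chain (by omega) hfar
  have ho0 : o = 0 := by
    have h1 := Finset.card_le_univ ((Finset.range (m-1)).biUnion (fun i => (t i).support))
    have h2 : Fintype.card W ≤ Fintype.card X := Fintype.card_subtype_le _
    rw [hU] at h1
    by_contra hcon
    have : m * 1 ≤ m * o := Nat.mul_le_mul_left _ (by omega)
    omega
  have ht1 : ∀ i, i + 1 < m → t i = 1 := by
    intro i hi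
    have := ho i hi
    rw [ho0, mul_zero, Finset.card_eq_zero, support_eq_empty_iff] at this
    exact this
  intro i j hi hj
  ext x
  by_cases hx : x ∈ Z
  · exact z2 i j hi hj x hx
  · have e1 := htv i hi ⟨x, hx⟩
    have e2 := htv j hj ⟨x, hx⟩
    rw [ht1 i hi] at e1
    rw [ht1 j hj] at e2
    exact e1.symm.trans e2
end LinBr
end

section
open Equiv Equiv.Perm
namespace LinBr

/-- labelling -/
def lab {X : Type} (s : ℕ → Perm X) (x0 : X) : ℕ → Bool → X
  | 0, false => x0
  | 0, true => s 0 (s 0 x0)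
  | i+1, ε => (s i)⁻¹ (lab s x0 i ε)

theorem labelling {X : Type} {n : ℕ} (hn : 4 ≤ n) {s : ℕ → Perm X} {Q : ℕ → Set X}
    (h1 : ∀ i, i + 1 < n → ∀ x, s i x ∈ Q i ↔ x ∈ Q i)
    (h2 : ∀ i j, i + 2 ≤ j → j + 1 < n → ∀ x, x ∈ Q i → x ∉ Q j)
    (h3 : ∀ i, i + 2 < n → ∀ x ∈ Q i, (s i x ∈ Q (i+1) ↔ x ∉ Q (i+1)))
    (h3' : ∀ i, i + 2 < n → ∀ x ∈ Q (i+1), (s (i+1) x ∈ Q i ↔ x ∉ Q i))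
    (h4 : ∀ i, i + 1 < n → ∀ x ∈ Q i, s i (s i x) ≠ x ∧ s i (s i (s i (s i x))) = x)
    (h5 : ∀ i, i + 2 < n → ∀ x ∈ Q i, x ∈ Q (i+1) → s i (s i x) = s (i+1) (s (i+1) x))
    (h6 : ∃ x, x ∈ Q 0 ∧ x ∉ Q 1) :
    ∃ e : ℕ → Bool → X,
      (∀ j k ε δ, j < n → k < n → e j ε = e k δ → j = k ∧ ε = δ) ∧
      (∀ i, i + 1 < n → ∀ ε, s i (e i ε) = e (i+1) (!ε) ∧ s i (e (i+1) ε) = e i ε) ∧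
      (∀ i j, i + 1 < n → j < n → ∀ ε, e j ε ∈ Q i ↔ (i = j ∨ i + 1 = j)) := by
  obtain ⟨x0, hx0, hx1⟩ := h6
  set e := lab s x0 with he
  have es : ∀ i ε, s i (e (i+1) ε) = e i ε := by
    intro i ε
    exact (s i).apply_symm_apply _
  have inv : ∀ i, i + 1 < n → ∀ ε, e i ε ∈ Q i ∧ (i + 2 < n → e i ε ∉ Q (i+1)) ∧
      e i (!ε) = s i (s i (e i ε)) := by
    intro i
    induction i with
    | zero =>
      intro hi ε
      have q1 := (h1 0 hi x0).2 hx0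
      have q2 := (h1 0 hi _).2 q1
      cases ε
      · exact ⟨hx0, fun _ => hx1, rfl⟩
      · refine ⟨q2, fun h => ?_, ((h4 0 hi x0 hx0).2).symm⟩
        rw [show e 0 true = s 0 (s 0 x0) from rfl, h3 0 h _ q1, not_not]
        exact (h3 0 h _ hx0).2 hx1
    | succ i ih =>
      intro hi ε
      obtain ⟨a, b, c⟩ := ih (by omega) ε
      have b := b (by omega)
      have e1 := es i ε
      rw [← e1] at a b c
      have y1 := (h1 i (by omega) _).1 a
      have y2 : e (i+1) ε ∈ Q (i+1) := by
        by_contra hc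
        exact b ((h3 i (by omega) _ y1).2 hc)
      refine ⟨y2, fun h => h2 i (i+2) (by omega) (by omega) _ y1, ?_⟩
      rw [← h5 i (by omega) _ y1 y2]
      apply (s i).injective
      rw [es, c]
  have in1 : ∀ i, i + 1 < n → ∀ ε, e (i+1) ε ∈ Q i := by
    intro i hi ε
    rw [← h1 i hi, es]
    exact (inv i hi ε).1
  have out1 : ∀ i, i + 2 < n → ∀ ε, e (i+2) ε ∉ Q i := by
    intro i hi ε
    rw [← h3' i hi _ (in1 (i+1) (by omega) ε), es]
    exact in1 i (by omega) ε
  have mem : ∀ i j, i + 1 < n → j < n → ∀ ε, e j ε ∈ Q i ↔ (i = j ∨ i + 1 = j) := by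
    intro i j hi hj ε
    constructor
    · intro hm
      by_contra hc
      by_cases c1 : j < i
      · by_cases c2 : j + 1 = i
        · subst c2
          exact (inv j (by omega) ε).2.1 (by omega) hm
        · exact h2 j i (by omega) (by omega) _ (inv j (by omega) ε).1 hm
      · obtain ⟨k, rfl⟩ : ∃ k, j = k + 2 := ⟨j - 2, by omega⟩
        by_cases c2 : i = k
        · subst c2
          exact out1 i hj ε hm
        · exact h2 i (k+1) (by omega) (by omega) _ hm (in1 (k+1) (by omega) ε)
    · rintro (rfl | rfl)
      · exact (inv i hi ε).1
      · exact in1 i hi ε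
  have inj1 : ∀ j k ε δ, j < n → k < n → e j ε = e k δ → j = k := by
    have aux : ∀ j k ε δ, j < k → k < n → e j ε ≠ e k δ := by
      intro j k ε δ hj hk h
      have q : ∀ i, i + 1 < n → ((i = j ∨ i + 1 = j) ↔ (i = k ∨ i + 1 = k)) := by
        intro i hi
        rw [← mem i j hi (by omega) ε, ← mem i k hi hk δ, h]
      have q1 := q (k-1) (by omega)
      by_cases hk2 : k + 1 < n
      · have := q k hk2
        omega
      · have := q (j-1) (by omega)
        omega
    intro j k ε δ hj hk h
    rcases lt_trichotomy j k with c | c | c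
    · exact absurd h (aux _ _ _ _ c hk)
    · exact c
    · exact absurd h.symm (aux _ _ _ _ c hj)
  have flip : ∀ j ε, j < n → e j ε ≠ e j (!ε) := by
    intro j ε hj
    by_cases hj1 : j + 1 < n
    · rw [(inv j hj1 ε).2.2]
      exact (h4 j hj1 _ (inv j hj1 ε).1).1.symm
    · obtain ⟨k, rfl⟩ : ∃ k, j = k + 1 := ⟨j - 1, by omega⟩
      intro h
      have := congrArg (s k) h
      rw [es, es, (inv k hj ε).2.2] at this
      exact (h4 k hj _ (inv k hj ε).1).1 this.symm
  refine ⟨e, ?_, ?_, mem⟩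
  · intro j k ε δ hj hk h
    have := inj1 j k ε δ hj hk h
    subst this
    refine ⟨rfl, ?_⟩
    by_contra hc
    have : δ = !ε := by
      clear * - hc
      revert hc; revert ε δ; decide
    subst this
    exact flip j ε hj h
  · intro i hi ε
    refine ⟨?_, es i ε⟩
    apply (s i).injective
    rw [es, (inv i hi ε).2.2]

/-- surjectivity of a labelling -/
theorem lab_surj {X : Type} [Fintype X] {n : ℕ} (hX : Fintype.card X = 2 * n) {e : ℕ → Bool → X}
    (he : ∀ j k ε δ, j < n → k < n → e j ε = e k δ → j = k ∧ ε = δ) :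
    ∀ x, ∃ j ε, j < n ∧ e j ε = x := by
  have inj : Function.Injective (fun p : Fin n × Bool => e p.1 p.2) := by
    rintro ⟨j, ε⟩ ⟨k, δ⟩ h
    obtain ⟨a, b⟩ := he j k ε δ j.2 k.2 h
    exact Prod.ext (Fin.ext a) b
  have bij := (Fintype.bijective_iff_injective_and_card _).2 ⟨inj, by simp [hX, mul_comm]⟩
  intro x
  obtain ⟨⟨j, ε⟩, h⟩ := bij.2 x
  exact ⟨j, ε, j.2, h⟩

end LinBr
end

section
open Equiv Equiv.Perm
namespace LinBr

/-- labelled points -/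
def pt {n : ℕ} (j : Fin n) (ε : Bool) : Fin (2*n) :=
  if ε then ⟨n + j, by omega⟩ else ⟨j, by omega⟩

theorem pt_inj {n : ℕ} {j k : Fin n} {ε δ : Bool} : pt j ε = pt k δ ↔ j = k ∧ ε = δ := by
  have := j.2
  have := k.2
  cases ε <;> cases δ <;> simp [pt, Fin.ext_iff] <;> omega

theorem tw_pt {n : ℕ} (j k : Fin n) (ε : Bool) :
    tw n j (pt k ε) = if k = j then pt k (!ε) else pt k ε := by
  have : tw n j = swap (pt j false) (pt j true) := rfl
  rw [this, swap_apply_def]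
  simp only [pt_inj]
  by_cases h : k = j
  · subst h; cases ε <;> simp
  · simp [h]

theorem twl_pt {n : ℕ} (P : Fin n → Prop) [DecidablePred P] (k : Fin n) (l : List (Fin n))
    (hl : l.Nodup) (ε : Bool) :
    ((l.map (fun j : Fin n => if P j then tw n j else 1)).prod) (pt k ε) =
      if k ∈ l ∧ P k then pt k (!ε) else pt k ε := by
  induction l with
  | nil => simp
  | cons a l ih =>
    rw [List.nodup_cons] at hl
    rw [List.map_cons, List.prod_cons, mul_apply, ih hl.2]
    by_cases hP : P a
    · rw [if_pos hP]
      by_cases hk : k = a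
      · subst hk
        simp [hl.1, hP, tw_pt]
      · by_cases hk2 : k ∈ l ∧ P k
        · simp [hk2, tw_pt, hk]
        · simp [hk2, tw_pt, hk]
    · rw [if_neg hP, one_apply]
      by_cases hk : k = a
      · subst hk
        simp [hP]
      · simp [hk]

theorem low_pt {n : ℕ} (i : Fin (n-1)) (k : Fin n) (ε : Bool) :
    lowTw n i (pt k ε) = if (k : ℕ) < i then pt k (!ε) else pt k ε := by
  rw [lowTw, twl_pt (fun j : Fin n => (j : ℕ) < (i : ℕ)) k _ (List.nodup_finRange n)]
  simp

theorem high_pt {n : ℕ} (i : Fin (n-1)) (k : Fin n) (ε : Bool) :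
    highTw n i (pt k ε) = if (i : ℕ) + 2 ≤ k then pt k (!ε) else pt k ε := by
  rw [highTw, twl_pt (fun j : Fin n => (i : ℕ) + 2 ≤ (j : ℕ)) k _ (List.nodup_finRange n)]
  simp

theorem L1_pt {n : ℕ} (i : ℕ) (hi : i + 1 < n) (k : Fin n) (ε : Bool) :
    linL1Gen n ⟨i, by omega⟩ (pt k ε) = if (k : ℕ) = i then pt ⟨i+1, hi⟩ (!ε) else
      if (k : ℕ) = i + 1 then pt ⟨i, by omega⟩ ε else pt k ε := by
  have : linL1Gen n ⟨i, by omega⟩ = cyc4 (pt ⟨i, by omega⟩ false) (pt ⟨i+1, hi⟩ true)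
    (pt ⟨i, by omega⟩ true) (pt ⟨i+1, hi⟩ false) := rfl
  rw [this, cyc4, mul_apply, mul_apply]
  simp only [swap_apply_def]
  by_cases h1 : (k : ℕ) = i
  · subst h1
    have q1 : k ≠ ⟨k+1, hi⟩ := fun h => by have := congrArg Fin.val h; simp at this
    cases ε <;> simp [pt_inj, q1, q1.symm]
  · by_cases h2 : (k : ℕ) = i + 1
    · obtain rfl : k = ⟨i+1, by omega⟩ := Fin.ext h2
      cases ε <;> simp [pt_inj]
    · have g1 : k ≠ ⟨i, by omega⟩ := fun h => h1 (congrArg Fin.val h)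
      have g2 : k ≠ ⟨i+1, hi⟩ := fun h => h2 (congrArg Fin.val h)
      simp [pt_inj, g1, g2, h1, h2]

theorem L2_pt {n : ℕ} (i : ℕ) (hi : i + 1 < n) (k : Fin n) (ε : Bool) :
    linL2Gen n ⟨i, by omega⟩ (pt k ε) = if (k : ℕ) = i then pt ⟨i+1, hi⟩ (!ε) else
      if (k : ℕ) = i + 1 then pt ⟨i, by omega⟩ ε else pt k (!ε) := by
  rw [linL2Gen, mul_apply, mul_apply, high_pt]
  by_cases h1 : (k : ℕ) = i
  · subst h1
    simp [L1_pt, low_pt, hi]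
  · by_cases h2 : (k : ℕ) = i + 1
    · obtain rfl : k = ⟨i+1, by omega⟩ := Fin.ext h2
      simp [L1_pt, low_pt, hi]
    · have g1 : k ≠ ⟨i, by omega⟩ := fun h => h1 (congrArg Fin.val h)
      have g2 : k ≠ ⟨i+1, hi⟩ := fun h => h2 (congrArg Fin.val h)
      by_cases h3 : i + 2 ≤ (k : ℕ)
      · have : ¬ (k : ℕ) < i := by omega
        simp [L1_pt, low_pt, hi, h1, h2, h3, this]
      · have : (k : ℕ) < i := by omega
        simp [L1_pt, low_pt, hi, h1, h2, h3, this]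

theorem L3_pt {n : ℕ} (i : ℕ) (hi : i + 1 < n) (k : Fin n) (ε : Bool) :
    linL3Gen n ⟨i, by omega⟩ (pt k ε) = if (k : ℕ) = i then pt ⟨i+1, hi⟩ (!ε) else
      if (k : ℕ) = i + 1 then pt ⟨i, by omega⟩ (!ε) else pt k (!ε) := by
  have : linL3Gen n ⟨i, by omega⟩ = lowTw n ⟨i, by omega⟩ *
    (swap (pt ⟨i, by omega⟩ false) (pt ⟨i+1, hi⟩ true) *
    swap (pt ⟨i+1, hi⟩ false) (pt ⟨i, by omega⟩ true)) * highTw n ⟨i, by omega⟩ := rfl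
  rw [this, mul_apply, mul_apply, high_pt]
  simp only [mul_apply, swap_apply_def]
  by_cases h1 : (k : ℕ) = i
  · subst h1
    have q1 : k ≠ ⟨k+1, hi⟩ := fun h => by have := congrArg Fin.val h; simp at this
    cases ε <;> simp [low_pt, pt_inj, q1, q1.symm]
  · by_cases h2 : (k : ℕ) = i + 1
    · obtain rfl : k = ⟨i+1, by omega⟩ := Fin.ext h2
      cases ε <;> simp [low_pt, pt_inj]
    · have g1 : k ≠ ⟨i, by omega⟩ := fun h => h1 (congrArg Fin.val h)
      have g2 : k ≠ ⟨i+1, hi⟩ := fun h => h2 (congrArg Fin.val h)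
      by_cases h3 : i + 2 ≤ (k : ℕ)
      · have : ¬ (k : ℕ) < i := by omega
        simp [low_pt, pt_inj, g1, g2, h1, h2, h3, this]
      · have : (k : ℕ) < i := by omega
        simp [low_pt, pt_inj, g1, g2, h1, h2, h3, this]

/-- pairs -/
theorem pt_bij (n : ℕ) : Function.Bijective (fun p : Fin n × Bool => pt p.1 p.2) := by
  refine (Fintype.bijective_iff_injective_and_card _).2 ⟨?_, by simp [mul_comm]⟩
  rintro ⟨j, ε⟩ ⟨k, δ⟩ h
  obtain ⟨a, b⟩ := pt_inj.1 h
  exact Prod.ext a b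

/-- conclusion from a labelling -/
theorem conj_of_lab {n : ℕ} {s : ℕ → Perm (Fin (2*n))} {e : ℕ → Bool → Fin (2*n)}
    (he : ∀ j k ε δ, j < n → k < n → e j ε = e k δ → j = k ∧ ε = δ)
    (L : ∀ i : Fin (n-1), Perm (Fin (2*n))) (a b : Bool)
    (hL : ∀ (i : ℕ) (hi : i + 1 < n) (k : Fin n) (ε : Bool), L ⟨i, by omega⟩ (pt k ε) =
      if (k : ℕ) = i then pt ⟨i+1, hi⟩ (!ε) else
      if (k : ℕ) = i + 1 then pt ⟨i, by omega⟩ (xor a ε) else pt k (xor b ε))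
    (hs : ∀ i, i + 1 < n → ∀ k, k < n → ∀ ε, s i (e k ε) = if k = i then e (i+1) (!ε) else
      if k = i + 1 then e i (xor a ε) else e k (xor b ε)) :
    ∃ u : Perm (Fin (2*n)), ∀ i : Fin (n-1), s i = u * L i * u⁻¹ := by
  have inj : Function.Injective (fun p : Fin n × Bool => e p.1 p.2) := by
    rintro ⟨j, ε⟩ ⟨k, δ⟩ h
    obtain ⟨a, b⟩ := he j k ε δ j.2 k.2 h
    exact Prod.ext (Fin.ext a) b
  have bij := (Fintype.bijective_iff_injective_and_card _).2 ⟨inj, by simp [mul_comm]⟩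
  set u : Perm (Fin (2*n)) := (Equiv.ofBijective _ (pt_bij n)).symm.trans (Equiv.ofBijective _ bij)
    with hu
  have up : ∀ (k : Fin n) ε, u (pt k ε) = e k ε := by
    intro k ε
    have : (Equiv.ofBijective _ (pt_bij n)).symm (pt k ε) = (k, ε) := by
      rw [Equiv.symm_apply_eq]; rfl
    simp only [hu, Equiv.trans_apply, this]
    rfl
  refine ⟨u, fun i => ?_⟩
  rw [eq_mul_inv_iff_mul_eq]
  ext1 x
  obtain ⟨⟨k, ε⟩, rfl⟩ := (pt_bij n).2 x
  obtain ⟨i, hi⟩ := i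
  simp only [mul_apply, up]
  rw [hs i (by omega) k k.2, hL i (by omega)]
  split_ifs <;> rw [up]

end LinBr
end

section
open Equiv Equiv.Perm
namespace LinBr

/-- existence of a labelling in which the generators act by a Lin rule -/
def HasLab {X : Type} (n : ℕ) (s : ℕ → Perm X) (a b : Bool) : Prop :=
  ∃ e : ℕ → Bool → X, (∀ j k ε δ, j < n → k < n → e j ε = e k δ → j = k ∧ ε = δ) ∧
    ∀ i, i + 1 < n → ∀ k, k < n → ∀ ε, s i (e k ε) = if k = i then e (i+1) (!ε) else
      if k = i + 1 then e i (xor a ε) else e k (xor b ε)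

section
variable {X : Type} [Fintype X] [DecidableEq X]

theorem three_le_cyc {s : Perm X} {x : X} (h : s (s x) ≠ x) :
    3 ≤ (s.cycleOf x).support.card := by
  have h1 : s x ≠ x := fun h1 => h (by rw [h1, h1])
  have h2 : s (s x) ≠ s x := fun h2 => h1 (s.injective h2)
  have m0 : x ∈ (s.cycleOf x).support := by
    rw [mem_support_cycleOf_iff]; exact ⟨SameCycle.refl _ _, by simpa using h1⟩
  have m1 : s x ∈ (s.cycleOf x).support := by
    rw [mem_support_cycleOf_iff] at m0 ⊢
    refine ⟨?_, by simpa using h1⟩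
    exact sameCycle_apply_right.2 m0.1
  have m2 : s (s x) ∈ (s.cycleOf x).support := by
    rw [mem_support_cycleOf_iff] at m1 ⊢
    refine ⟨?_, by simpa using h1⟩
    exact sameCycle_apply_right.2 m1.1
  have : ({x, s x, s (s x)} : Finset X) ⊆ (s.cycleOf x).support := by
    intro y hy
    simp only [Finset.mem_insert, Finset.mem_singleton] at hy
    rcases hy with rfl | rfl | rfl <;> assumption
  have hc := Finset.card_le_card this
  rwa [Finset.card_eq_three.2 ⟨x, s x, s (s x), h1.symm, h.symm, h2.symm, rfl⟩] at hc

theorem agree3 {n : ℕ} (hn : 7 ≤ n) (hX : Fintype.card X = 2 * n) {s : ℕ → Perm X} (h : Br n s)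
    {x : X} (hx : s 0 (s 0 x) ≠ x) : ∀ j, 2 ≤ j → j + 1 < n → s j x = s (n-2) x := by
  intro j hj hjn
  have hx' : x ∈ cpt (s 0) (fun j => 3 ≤ j) :=
    mem_cpt_iff.2 ⟨fun h1 => hx (by rw [h1, h1]), three_le_cyc hx⟩
  have := agree_cyc (s := s 0) (p := fun j => 3 ≤ j) (by omega) (artin (n-2) (by omega))
      (h.shift (k := 2) (by omega))
      (fun i hi => (h.comm 0 (i+2) (by omega) (by omega)).symm) (by
        have h1 := cyc_card_le (s := s 0) (p := fun j => 3 ≤ j) 3 (fun j _ h => h)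
        have h2 := Finset.card_le_univ (cpt (s 0) (fun j => 3 ≤ j))
        omega) (j-2) (n-4) (by omega) (by omega) x hx'
  rwa [show j - 2 + 2 = j by omega, show n - 4 + 2 = n - 2 by omega] at this

/-- few points outside the two-cycles -/
def NB (f : Perm X) : Prop :=
  (Finset.univ.filter (fun x => f (f x) ≠ x)).card + (Finset.univ.filter (fun x => f x = x)).card ≤ 4

theorem NB_conj {f f' g : Perm X} (h : g * f * g⁻¹ = f') (hf : NB f) : NB f' := by
  have e1 : (Finset.univ.filter (fun x => f (f x) ≠ x)).card =
      (Finset.univ.filter (fun x => f' (f' x) ≠ x)).card := by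
    apply Finset.card_equiv g
    intro x
    simp [conj_apply h]
  have e2 : (Finset.univ.filter (fun x => f x = x)).card =
      (Finset.univ.filter (fun x => f' x = x)).card := by
    apply Finset.card_equiv g
    intro x
    simp [conj_apply h]
  unfold NB at *
  omega

theorem good_or {n : ℕ} (hn : 7 ≤ n) (hX : Fintype.card X = 2 * n) {s : ℕ → Perm X} (h : Br n s) :
    (∀ x, s 0 x ≠ x → ∀ j, 2 ≤ j → j + 1 < n → s j x = s (n-2) x) ∨ NB (s 0) := by
  by_cases hc : (cyc (s 0) (fun j => j ≤ 2)).card < n - 2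
  · left
    intro x hx j hj hjn
    by_cases h3 : s 0 (s 0 x) ≠ x
    · exact agree3 hn hX h h3 j hj hjn
    by_cases hp : 3 ≤ ((s 0).cycleOf x).support.card
    · have hx' : x ∈ cpt (s 0) (fun j => 3 ≤ j) := mem_cpt_iff.2 ⟨hx, hp⟩
      have := agree_cyc (s := s 0) (p := fun j => 3 ≤ j) (by omega) (artin (n-2) (by omega))
        (h.shift (k := 2) (by omega))
        (fun i hi => (h.comm 0 (i+2) (by omega) (by omega)).symm) (by
          have h1 := cyc_card_le (s := s 0) (p := fun j => 3 ≤ j) 3 (fun j _ h => h)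
          have h2 := Finset.card_le_univ (cpt (s 0) (fun j => 3 ≤ j))
          omega) (j-2) (n-4) (by omega) (by omega) x hx'
      rwa [show j - 2 + 2 = j by omega, show n - 4 + 2 = n - 2 by omega] at this
    · have hx' : x ∈ cpt (s 0) (fun j => j ≤ 2) := mem_cpt_iff.2 ⟨hx, by omega⟩
      have := agree_cyc (s := s 0) (p := fun j => j ≤ 2) (by omega) (artin (n-2) (by omega))
        (h.shift (k := 2) (by omega))
        (fun i hi => (h.comm 0 (i+2) (by omega) (by omega)).symm) hc
        (j-2) (n-4) (by omega) (by omega) x hx'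
      rwa [show j - 2 + 2 = j by omega, show n - 4 + 2 = n - 2 by omega] at this
  · right
    have h1 := cyc_card_le (s := s 0) (p := fun j => j ≤ 2) 2 (fun j h _ => h)
    have d1 : Disjoint (Finset.univ.filter (fun x => s 0 (s 0 x) ≠ x))
        (Finset.univ.filter (fun x => s 0 x = x)) := by
      rw [Finset.disjoint_left]
      intro x hx hy
      simp only [Finset.mem_filter, Finset.mem_univ, true_and] at hx hy
      exact hx (by rw [hy, hy])
    have d2 : Disjoint (cpt (s 0) (fun j => j ≤ 2)) ((Finset.univ.filter (fun x => s 0 (s 0 x) ≠ x))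
        ∪ (Finset.univ.filter (fun x => s 0 x = x))) := by
      rw [Finset.disjoint_left]
      intro x hx hy
      simp only [Finset.mem_filter, Finset.mem_univ, true_and, Finset.mem_union] at hy
      rw [mem_cpt_iff] at hx
      rcases hy with hy | hy
      · have := three_le_cyc hy
        omega
      · exact hx.1 hy
    have h2 := Finset.card_le_univ (cpt (s 0) (fun j => j ≤ 2) ∪
      ((Finset.univ.filter (fun x => s 0 (s 0 x) ≠ x))
        ∪ (Finset.univ.filter (fun x => s 0 x = x))))
    rw [Finset.card_union_of_disjoint d2, Finset.card_union_of_disjoint d1] at h2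
    unfold NB
    omega

omit [Fintype X] in
theorem half_swap {f : Perm X} {A B : Finset X} (hc : B.card ≤ A.card) (hd : Disjoint A B)
    (hf : ∀ x ∈ A, f x ∈ B) {x : X} (hx : x ∈ B) : f x ∉ B := by
  intro hfx
  have : A.image f = B := by
    apply Finset.eq_of_subset_of_card_le
    · intro y hy
      obtain ⟨z, hz, rfl⟩ := Finset.mem_image.1 hy
      exact hf z hz
    · rwa [Finset.card_image_of_injective _ f.injective]
  rw [← this] at hfx
  obtain ⟨z, hz, hzx⟩ := Finset.mem_image.1 hfx
  rw [f.injective hzx] at hz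
  exact Finset.disjoint_left.1 hd hz hx

omit [Fintype X] in
theorem two_eq {A : Finset X} (hA : A.card = 2) {x y z : X} (hx : x ∈ A) (hy : y ∈ A) (hz : z ∈ A)
    (hxy : y ≠ x) (hxz : z ≠ x) : y = z := by
  by_contra h
  have : ({x, y, z} : Finset X) ⊆ A := by
    intro w hw
    simp only [Finset.mem_insert, Finset.mem_singleton] at hw
    rcases hw with rfl | rfl | rfl <;> assumption
  have hc := Finset.card_le_card this
  rw [Finset.card_eq_three.2 ⟨x, y, z, hxy.symm, hxz.symm, h, rfl⟩] at hc
  omega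

omit [Fintype X] in
theorem four_aux {f : Perm X} {A B : Finset X} (hA : A.card = 2)
    (fA : ∀ x ∈ A, f x ∈ B) (fB : ∀ x ∈ B, f x ∈ A) {x : X} (hx : x ∈ A) (hff : f (f x) ≠ x) :
    ∀ y, y ∈ A ∨ y ∈ B → f (f y) ≠ y ∧ f (f (f (f y))) = y := by
  have hA2 : ∀ y ∈ A, f (f y) ∈ A := fun y hy => fB _ (fA y hy)
  have x4 : f (f (f (f x))) = x := by
    refine two_eq hA (hA2 x hx) (hA2 _ (hA2 x hx)) hx ?_ hff.symm
    intro h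
    exact hff (f.injective (f.injective h))
  have yA : ∀ y ∈ A, f (f y) ≠ y ∧ f (f (f (f y))) = y := by
    intro y hy
    by_cases hyx : y = x
    · subst hyx; exact ⟨hff, x4⟩
    · have : y = f (f x) := two_eq hA hx hy (hA2 x hx) hyx hff
      subst this
      exact ⟨fun h => hff (f.injective (f.injective h)), by rw [x4]⟩
  rintro y (hy | hy)
  · exact yA y hy
  · obtain ⟨a, b⟩ := yA _ (fB y hy)
    exact ⟨fun h => a (by rw [h]), f.injective b⟩

omit [Fintype X] in
theorem four_lemma {f : Perm X} {A B : Finset X} (hA : A.card = 2) (hB : B.card = 2)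
    (fA : ∀ x ∈ A, f x ∈ B) (fB : ∀ x ∈ B, f x ∈ A) {x : X} (hx : x ∈ A ∨ x ∈ B)
    (hff : f (f x) ≠ x) :
    ∀ y, y ∈ A ∨ y ∈ B → f (f y) ≠ y ∧ f (f (f (f y))) = y := by
  rcases hx with hx | hx
  · exact four_aux hA fA fB hx hff
  · intro y hy
    exact four_aux hB fB fA hx hff y hy.symm

theorem caseGood {n : ℕ} (hn : 7 ≤ n) (hX : Fintype.card X = 2 * n) {s : ℕ → Perm X} (h : Br n s)
    (hT : ∀ Z : Set X, Z.Nonempty → (∀ i, i + 1 < n → ∀ x ∈ Z, s i x ∈ Z) → Z = Set.univ)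
    (g0 : ∀ x, s 0 x ≠ x → ∀ j, 2 ≤ j → j + 1 < n → s j x = s (n-2) x)
    (g1 : ∀ x, s (n-2) x ≠ x → ∀ j, j + 3 < n → s j x = s 0 x)
    (hsq : ∃ x, s 0 (s 0 x) ≠ x) :
    (∀ i j, i + 1 < n → j + 1 < n → s i = s j) ∨ HasLab n s false false := by
  set Q0 : Set X := {x | s 0 x ≠ x}
  set Q1 : Set X := {x | s (n-2) x ≠ x}
  have hcm : ∀ x, s 0 (s (n-2) x) = s (n-2) (s 0 x) := h.comm_apply (by omega) (by omega)
  obtain ⟨z1, z2⟩ := h.Z_lemma (by omega) (Q0 := Q0) (Q1 := Q1)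
    (fun x hx hh => hx ((s 0).injective hh))
    (fun x hx hh => hx (by
      rw [hcm] at hh; exact (s (n-2)).injective hh))
    (fun x hx j h1 h2 => g0 x hx j h1 h2)
    (fun x hx hh => hx (by
      rw [← hcm] at hh; exact (s 0).injective hh))
    (fun x hx hh => hx ((s (n-2)).injective hh))
    (fun x hx j h1 => g1 x hx j h1)
  by_cases hne : (Q0 ∩ Q1).Nonempty
  · left
    have hu := hT _ hne z1
    intro i j hi hj
    ext1 x
    exact z2 i j hi hj x (by rw [hu]; trivial)
  right
  have hfar := h.far_disj (by omega) (by
    intro j hj hjm x hx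
    rw [g0 x hx j hj hjm]
    by_contra hcon
    exact hne ⟨x, hx, hcon⟩)
  obtain ⟨o, ho, ho2, hU⟩ := h.chain (by omega) hfar
  obtain ⟨x0, hx0⟩ := hsq
  have hx01 : s 0 x0 ≠ x0 := fun h1 => hx0 (by rw [h1, h1])
  have hun : ((Finset.range (n-1)).biUnion (fun i => (s i).support)) = Finset.univ := by
    have := hT ((Finset.range (n-1)).biUnion (fun i => (s i).support) : Finset X)
      ⟨x0, by
        simp only [Finset.mem_coe, Finset.mem_biUnion, Finset.mem_range, mem_support]
        exact ⟨0, by omega, hx01⟩⟩ (by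
        intro i hi x hx
        by_cases hix : s i x = x
        · rwa [hix]
        · simp only [Finset.mem_coe, Finset.mem_biUnion, Finset.mem_range, mem_support]
          exact ⟨i, by omega, fun h => hix ((s i).injective h)⟩)
    exact_mod_cast this
  have o2 : o = 2 := by
    rw [hun, Finset.card_univ, hX, mul_comm] at hU
    exact (Nat.eq_of_mul_eq_mul_left (by omega) hU).symm
  subst o2
  have hd1 : ∀ i, i + 2 < n → ((s i).support \ (s (i+1)).support).card = 2 := by
    intro i hi
    have h1 := Finset.card_sdiff_add_card_inter (s i).support (s (i+1)).support
    rw [ho2 i hi, ho i (by omega)] at h1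
    omega
  have hd2 : ∀ i, i + 2 < n → ((s (i+1)).support \ (s i).support).card = 2 := by
    intro i hi
    have h1 := Finset.card_sdiff_add_card_inter (s (i+1)).support (s i).support
    rw [Finset.inter_comm, ho2 i hi, ho (i+1) (by omega)] at h1
    omega
  have m1 : ∀ i, i + 2 < n → ∀ x ∈ (s i).support \ (s (i+1)).support,
      s i x ∈ (s i).support ∩ (s (i+1)).support := by
    intro i hi x hx
    simp only [Finset.mem_sdiff, Finset.mem_inter, mem_support, not_not] at hx ⊢
    exact ⟨fun hh => hx.1 ((s i).injective hh), braid_move (h.braid_apply hi) hx.1 hx.2⟩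
  have m2 : ∀ i, i + 2 < n → ∀ x ∈ (s (i+1)).support \ (s i).support,
      s (i+1) x ∈ (s i).support ∩ (s (i+1)).support := by
    intro i hi x hx
    simp only [Finset.mem_sdiff, Finset.mem_inter, mem_support, not_not] at hx ⊢
    exact ⟨braid_move (fun x => (h.braid_apply hi x).symm) hx.1 hx.2,
      fun hh => hx.1 ((s (i+1)).injective hh)⟩
  have m3 : ∀ i, i + 2 < n → ∀ x ∈ (s i).support ∩ (s (i+1)).support,
      s i x ∈ (s i).support \ (s (i+1)).support := by
    intro i hi x hx
    have := half_swap (by rw [ho2 i hi, hd1 i hi]) (Finset.disjoint_sdiff_inter _ _) (m1 i hi) hx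
    simp only [Finset.mem_sdiff, Finset.mem_inter, mem_support, not_not, not_and] at this hx ⊢
    have q : s i (s i x) ≠ s i x := fun hh => hx.1 ((s i).injective hh)
    exact ⟨q, this q⟩
  have m4 : ∀ i, i + 2 < n → ∀ x ∈ (s i).support ∩ (s (i+1)).support,
      s (i+1) x ∈ (s (i+1)).support \ (s i).support := by
    intro i hi x hx
    have := half_swap (by rw [ho2 i hi, hd2 i hi])
      (by rw [Finset.inter_comm]; exact Finset.disjoint_sdiff_inter _ _) (m2 i hi) hx
    simp only [Finset.mem_sdiff, Finset.mem_inter, mem_support, not_not] at this hx ⊢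
    have q : s (i+1) (s (i+1) x) ≠ s (i+1) x := fun hh => hx.2 ((s (i+1)).injective hh)
    refine ⟨q, ?_⟩
    by_contra hc
    exact this ⟨hc, q⟩
  have hsqi : ∀ i, i + 1 < n → ∃ x, s i (s i x) ≠ x := by
    intro i hi
    obtain ⟨g, hg⟩ := h.exists_shiftk i
    have e0 := hg 0 (by omega)
    rw [zero_add] at e0
    refine ⟨g x0, ?_⟩
    rw [conj_apply e0, conj_apply e0]
    exact fun hh => hx0 (g.injective hh)
  have h4 : ∀ i, i + 1 < n → ∀ x, s i x ≠ x → s i (s i x) ≠ x ∧ s i (s i (s i (s i x))) = x := by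
    intro i hi x hx
    obtain ⟨y, hy⟩ := hsqi i hi
    have hy1 : s i y ≠ y := fun h1 => hy (by rw [h1, h1])
    by_cases hi2 : i + 2 < n
    · have cl : ∀ z, s i z ≠ z → z ∈ (s i).support \ (s (i+1)).support ∨
          z ∈ (s i).support ∩ (s (i+1)).support := by
        intro z hz
        simp only [Finset.mem_sdiff, Finset.mem_inter, mem_support]
        tauto
      exact four_lemma (hd1 i hi2) (ho2 i hi2) (m1 i hi2) (m3 i hi2) (cl y hy1) hy x (cl x hx)
    · obtain ⟨k, rfl⟩ : ∃ k, i = k + 1 := ⟨i - 1, by omega⟩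
      have cl : ∀ z, s (k+1) z ≠ z → z ∈ (s (k+1)).support \ (s k).support ∨
          z ∈ (s k).support ∩ (s (k+1)).support := by
        intro z hz
        simp only [Finset.mem_sdiff, Finset.mem_inter, mem_support]
        tauto
      exact four_lemma (hd2 k (by omega)) (ho2 k (by omega)) (m2 k (by omega)) (m4 k (by omega))
        (cl y hy1) hy x (cl x hx)
  obtain ⟨e, he1, he2, he3⟩ := labelling (n := n) (by omega) (s := s) (Q := fun i => {x | s i x ≠ x})
    (fun i _ x => not_congr (s i).injective.eq_iff)
    (fun i j hij hj x hx hx2 => hx2 (hfar i j hij hj x hx))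
    (by
      intro i hi x hx
      have a := m1 i hi x
      have b := m3 i hi x
      simp only [Finset.mem_sdiff, Finset.mem_inter, mem_support, Set.mem_setOf_eq] at *
      tauto)
    (by
      intro i hi x hx
      have a := m2 i hi x
      have b := m4 i hi x
      simp only [Finset.mem_sdiff, Finset.mem_inter, mem_support, Set.mem_setOf_eq] at *
      tauto)
    h4
    (by
      intro i hi x hx hx2
      have hxB : x ∈ (s i).support ∩ (s (i+1)).support := by
        simp only [Finset.mem_inter, mem_support]; exact ⟨hx, hx2⟩
      exact two_eq (ho2 i hi) hxB (m1 i hi _ (m3 i hi x hxB)) (m2 i hi _ (m4 i hi x hxB))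
        (h4 i (by omega) x hx).1 (h4 (i+1) (by omega) x hx2).1)
    (by
      obtain ⟨x, hx⟩ := Finset.card_pos.1 (by rw [hd1 0 (by omega)]; omega :
        0 < ((s 0).support \ (s (0+1)).support).card)
      simp only [Finset.mem_sdiff, mem_support] at hx
      exact ⟨x, hx⟩)
  refine ⟨e, he1, ?_⟩
  intro i hi k hk ε
  split_ifs with c1 c2
  · subst c1; exact (he2 k hi ε).1
  · subst c2; simpa using (he2 i hi ε).2
  · have := (he3 i k hi hk ε).not.2 (by omega)
    simpa using this

end
end LinBr
end

section
open Equiv Equiv.Perm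
namespace LinBr

section
variable {X : Type} [Fintype X] [DecidableEq X]

omit [Fintype X] in
theorem card_ge {l : List X} (hl : l.Nodup) {A : Finset X} (h : ∀ x ∈ l, x ∈ A) :
    l.length ≤ A.card := by
  rw [← List.toFinset_card_of_nodup hl]
  exact Finset.card_le_card (fun x hx => h x (List.mem_toFinset.1 hx))

theorem badcore {n : ℕ} (hn : 7 ≤ n) {s : ℕ → Perm X} (h : Br n s) (hNB : NB (s 0))
    (hag : ∀ x, s 0 (s 0 x) ≠ x → ∀ j, 2 ≤ j → j + 1 < n → s j x = s (n-2) x)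
    (hd : ∀ x, s 0 (s 0 x) ≠ x → ∀ j, 2 ≤ j → j + 1 < n → s j (s j x) = x)
    {x : X} (hx : s 0 (s 0 x) ≠ x) :
    (∀ j, 2 ≤ j → j + 1 < n → s j x = s 0 (s 0 x)) ∧ s 0 (s 0 (s 0 (s 0 x))) = x ∧
    (∀ y, s 0 (s 0 y) ≠ y → y = x ∨ y = s 0 x ∨ y = s 0 (s 0 x) ∨ y = s 0 (s 0 (s 0 x))) ∧
    (∀ y, s 0 y ≠ y) := by
  have ia := (s 0).injective
  have hx1 : s 0 x ≠ x := fun h1 => hx (by rw [h1, h1])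
  have up : ∀ z, s 0 (s 0 z) ≠ z → s 0 (s 0 (s 0 z)) ≠ s 0 z := fun z hz hh => hz (ia hh)
  have c2 : ∀ z, s 0 (s 2 z) = s 2 (s 0 z) := h.comm_apply (by omega) (by omega)
  have upy : ∀ z, s 0 (s 0 z) ≠ z → s 0 (s 0 (s 2 z)) ≠ s 2 z := by
    intro z hz hh
    rw [c2, c2] at hh
    exact hz ((s 2).injective hh)
  have hd2 := hd x hx 2 (by omega) (by omega)
  -- s 2 moves x
  have hmove : s 2 x ≠ x := by
    intro hfix
    have h4 : ∀ z, s 0 (s 0 z) ≠ z → s 2 z = z → s 4 z = z := by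
      intro z hz h2
      rw [hag z hz 4 (by omega) (by omega), ← hag z hz 2 (by omega) (by omega), h2]
    have f1 : s 2 (s 0 x) = s 0 x := by rw [← c2, hfix]
    have f2 : s 2 (s 0 (s 0 x)) = s 0 (s 0 x) := by rw [← c2, f1]
    have k0 := h4 x hx hfix
    have k1 := h4 _ (up x hx) f1
    have k2 := h4 _ (up _ (up x hx)) f2
    obtain ⟨g, hg⟩ := h.exists_shiftk 2
    have e0 := hg 0 (by omega)
    have e2 := hg 2 (by omega)
    simp only [zero_add, show 2 + 2 = 4 from rfl] at e0 e2
    obtain ⟨g4, hg4⟩ := h.exists_shiftk 4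
    have e4 := hg4 0 (by omega)
    rw [zero_add] at e4
    have hNB4 := NB_conj e4 hNB
    have p0 : s 4 (g x) = g x := by rw [conj_apply e2, hfix]
    have p1 : s 4 (g (s 0 x)) = g (s 0 x) := by rw [conj_apply e2, f1]
    have p2 : s 4 (g (s 0 (s 0 x))) = g (s 0 (s 0 x)) := by rw [conj_apply e2, f2]
    have dj : ∀ z w, s 0 (s 0 z) ≠ z → s 0 (s 0 w) ≠ w → g z ≠ w := by
      intro z w hz hw hh
      have := hd w hw 2 (by omega) (by omega)
      rw [← hh, conj_apply e0, conj_apply e0] at this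
      exact hz (g.injective this)
    have u1 := up x hx
    have u2 := up _ u1
    have ig := g.injective
    have hl : [x, s 0 x, s 0 (s 0 x), g x, g (s 0 x), g (s 0 (s 0 x))].Nodup := by
      simp only [List.nodup_cons, List.mem_cons, List.not_mem_nil, not_or, or_false, not_false_eq_true,
        List.nodup_nil, and_true]
      refine ⟨⟨hx1.symm, hx.symm, (dj _ _ hx hx).symm, (dj _ _ u1 hx).symm, (dj _ _ u2 hx).symm⟩,
        ⟨fun hh => hx1 (ia hh).symm, (dj _ _ hx u1).symm, (dj _ _ u1 u1).symm, (dj _ _ u2 u1).symm⟩,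
        ⟨(dj _ _ hx u2).symm, (dj _ _ u1 u2).symm, (dj _ _ u2 u2).symm⟩,
        ⟨fun hh => hx1 (ig hh).symm, fun hh => hx (ig hh).symm⟩,
        fun hh => hx1 (ia (ig hh)).symm⟩
    have := card_ge hl (A := Finset.univ.filter (fun x => s 4 x = x)) (by
      intro z hz
      simp only [List.mem_cons, List.not_mem_nil, or_false] at hz
      simp only [Finset.mem_filter, Finset.mem_univ, true_and]
      rcases hz with rfl | rfl | rfl | rfl | rfl | rfl <;> assumption)
    unfold NB at hNB4
    simp only [List.length] at this
    omega
  have u1 := up x hx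
  have u2 := up _ u1
  have u3 := up _ u2
  have hcard : (Finset.univ.filter (fun x => s 0 (s 0 x) ≠ x)).card ≤ 4 := by
    unfold NB at hNB; omega
  have h3 : s 0 (s 0 (s 0 x)) ≠ x := by
    intro h3
    have n1 : s 2 x ≠ s 0 x := by
      intro hy
      rw [hy, ← c2, hy] at hd2
      exact hx hd2
    have n2 : s 2 x ≠ s 0 (s 0 x) := by
      intro hy
      rw [hy, ← c2, ← c2, hy, h3] at hd2
      exact hx1 hd2
    have hl : [x, s 0 x, s 0 (s 0 x), s 2 x, s 0 (s 2 x)].Nodup := by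
      simp only [List.nodup_cons, List.mem_cons, List.not_mem_nil, not_or, or_false, not_false_eq_true,
        List.nodup_nil, and_true]
      refine ⟨⟨hx1.symm, hx.symm, hmove.symm, ?_⟩, ⟨fun hh => hx1 (ia hh).symm, n1.symm, ?_⟩,
        ⟨n2.symm, ?_⟩, ?_⟩
      · intro hh
        exact n2 (ia (hh.symm.trans h3.symm))
      · intro hh
        exact hmove (ia hh).symm
      · intro hh
        exact n1 (ia hh).symm
      · rw [c2]; intro hh
        exact hx1 ((s 2).injective hh).symm
    have := card_ge hl (A := Finset.univ.filter (fun x => s 0 (s 0 x) ≠ x)) (by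
      intro z hz
      have v1 := upy x hx
      have v2 := up _ v1
      simp only [List.mem_cons, List.not_mem_nil, or_false] at hz
      simp only [Finset.mem_filter, Finset.mem_univ, true_and]
      rcases hz with rfl | rfl | rfl | rfl | rfl <;> assumption)
    simp only [List.length] at this
    omega
  have hl : [x, s 0 x, s 0 (s 0 x), s 0 (s 0 (s 0 x))].Nodup := by
    simp only [List.nodup_cons, List.mem_cons, List.not_mem_nil, not_or, or_false, not_false_eq_true,
        List.nodup_nil, and_true]
    exact ⟨⟨hx1.symm, hx.symm, h3.symm⟩, ⟨fun hh => hx1 (ia hh).symm, fun hh => hx (ia hh).symm⟩,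
      fun hh => hx1 (ia (ia hh)).symm⟩
  have hall : ∀ y, s 0 (s 0 y) ≠ y →
      y = x ∨ y = s 0 x ∨ y = s 0 (s 0 x) ∨ y = s 0 (s 0 (s 0 x)) := by
    intro y hy
    by_contra hc
    have hl' : (y :: [x, s 0 x, s 0 (s 0 x), s 0 (s 0 (s 0 x))]).Nodup := by
      rw [List.nodup_cons]
      exact ⟨by simpa using hc, hl⟩
    have := card_ge hl' (A := Finset.univ.filter (fun x => s 0 (s 0 x) ≠ x)) (by
      intro z hz
      simp only [List.mem_cons, List.not_mem_nil, or_false] at hz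
      simp only [Finset.mem_filter, Finset.mem_univ, true_and]
      rcases hz with rfl | rfl | rfl | rfl | rfl <;> assumption)
    simp only [List.length] at this
    omega
  have h4 : s 0 (s 0 (s 0 (s 0 x))) = x := by
    rcases hall _ (up _ u3) with hh | hh | hh | hh
    · exact hh
    · exact absurd (ia hh) h3
    · exact absurd (ia (ia hh)) hx
    · exact absurd (ia (ia (ia hh))) hx1
  refine ⟨?_, h4, hall, ?_⟩
  · have : s 2 x = s 0 (s 0 x) := by
      rcases hall _ (upy x hx) with hh | hh | hh | hh
      · exact absurd hh hmove
      · rw [hh, ← c2, hh] at hd2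
        exact absurd hd2 hx
      · exact hh
      · rw [hh, ← c2, ← c2, ← c2, hh, h4] at hd2
        exact absurd hd2 hx
    intro j hj hjn
    rw [hag x hx j hj hjn, ← hag x hx 2 (by omega) (by omega), this]
  · intro y hy
    have := card_ge hl (A := Finset.univ.filter (fun x => s 0 (s 0 x) ≠ x)) (by
      intro z hz
      simp only [List.mem_cons, List.not_mem_nil, or_false] at hz
      simp only [Finset.mem_filter, Finset.mem_univ, true_and]
      rcases hz with rfl | rfl | rfl | rfl <;> assumption)
    have : 0 < (Finset.univ.filter (fun x => s 0 x = x)).card :=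
      Finset.card_pos.2 ⟨y, by simpa using hy⟩
    unfold NB at hNB
    simp only [List.length] at *
    omega

/-- shifted version -/
theorem badAll {n : ℕ} (hn : 7 ≤ n) {s : ℕ → Perm X} (h : Br n s) (hNB : NB (s 0))
    (hag : ∀ x, s 0 (s 0 x) ≠ x → ∀ j, 2 ≤ j → j + 1 < n → s j x = s (n-2) x)
    (hd : ∀ x, s 0 (s 0 x) ≠ x → ∀ j, 2 ≤ j → j + 1 < n → s j (s j x) = x)
    {i : ℕ} (hi : i + 1 < n) :
    (∀ x, s i (s i x) ≠ x → (∀ j, i + 2 ≤ j → j + 1 < n → s j x = s i (s i x)) ∧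
    s i (s i (s i (s i x))) = x ∧
    (∀ y, s i (s i y) ≠ y → y = x ∨ y = s i x ∨ y = s i (s i x) ∨ y = s i (s i (s i x)))) ∧
    (∀ x, s i (s i x) ≠ x → ∀ y, s i y ≠ y) := by
  obtain ⟨g, hg⟩ := h.exists_shiftk i
  have e0 := hg 0 (by omega)
  rw [zero_add] at e0
  have key : ∀ x, s i (s i (g x)) ≠ g x → s 0 (s 0 x) ≠ x := by
    intro x hx hh
    rw [conj_apply e0, conj_apply e0, hh] at hx
    exact hx rfl
  refine ⟨?_, ?_⟩
  · intro x hx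
    obtain ⟨x, rfl⟩ := g.surjective x
    obtain ⟨a, b, c, -⟩ := badcore hn h hNB hag hd (key x hx)
    refine ⟨?_, ?_, ?_⟩
    · intro j hj hjn
      have e1 := hg (j-i) (by omega)
      rw [show j - i + i = j by omega] at e1
      rw [conj_apply e1, conj_apply e0, conj_apply e0, a (j-i) (by omega) (by omega)]
    · simp only [conj_apply e0]; rw [b]
    · intro y hy
      obtain ⟨y, rfl⟩ := g.surjective y
      simp only [conj_apply e0, g.injective.eq_iff]
      exact c y (key y hy)
  · intro x hx y
    obtain ⟨x, rfl⟩ := g.surjective x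
    obtain ⟨y, rfl⟩ := g.surjective y
    obtain ⟨-, -, -, d⟩ := badcore hn h hNB hag hd (key x hx)
    rw [conj_apply e0]
    exact fun hh => d y (g.injective hh)

theorem caseBad {n : ℕ} (hn : 7 ≤ n) (hX : Fintype.card X = 2 * n) {s : ℕ → Perm X} (h : Br n s)
    (hT : ∀ Z : Set X, Z.Nonempty → (∀ i, i + 1 < n → ∀ x ∈ Z, s i x ∈ Z) → Z = Set.univ)
    (hNB : NB (s 0)) (hsq : ∃ x, s 0 (s 0 x) ≠ x) :
    (∀ i j, i + 1 < n → j + 1 < n → s i = s j) ∨ HasLab n s false true := by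
  have g0 : ∀ x, s 0 (s 0 x) ≠ x → ∀ j, 2 ≤ j → j + 1 < n → s j x = s (n-2) x :=
    fun x hx => agree3 hn hX h hx
  have g1' : ∀ x, s (n-2) (s (n-2) x) ≠ x → ∀ j, 2 ≤ j → j + 1 < n → s (n-2-j) x = s 0 x := by
    intro x hx j hj hjn
    have := agree3 hn hX h.rev (x := x) (by simpa using hx) j hj hjn
    simpa using this
  have g1 : ∀ x, s (n-2) (s (n-2) x) ≠ x → ∀ j, j + 3 < n → s j x = s 0 x := by
    intro x hx j hj
    have := g1' x hx (n-2-j) (by omega) (by omega)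
    rwa [show n-2-(n-2-j) = j by omega] at this
  have hcm : ∀ x, s 0 (s (n-2) x) = s (n-2) (s 0 x) := h.comm_apply (by omega) (by omega)
  set Q0 : Set X := {x | s 0 (s 0 x) ≠ x}
  set Q1 : Set X := {x | s (n-2) (s (n-2) x) ≠ x}
  have b0 : ∀ x ∈ Q0, s (n-2) x ∈ Q0 := (fun x hx hh => hx (by
      rw [hcm, hcm] at hh; exact (s (n-2)).injective hh))
  have b1 : ∀ x ∈ Q1, s 0 x ∈ Q1 := (fun x hx hh => hx (by
      rw [← hcm, ← hcm] at hh; exact (s 0).injective hh))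
  obtain ⟨z1, z2⟩ := h.Z_lemma (by omega) (Q0 := Q0) (Q1 := Q1)
    (fun x hx hh => hx ((s 0).injective hh)) b0
    (fun x hx j h1 h2 => g0 x hx j h1 h2) b1
    (fun x hx hh => hx ((s (n-2)).injective hh))
    (fun x hx j h1 => g1 x hx j h1)
  by_cases hne : (Q0 ∩ Q1).Nonempty
  · left
    have hu := hT _ hne z1
    intro i j hi hj
    ext1 x
    exact z2 i j hi hj x (by rw [hu]; trivial)
  right
  have hd0 : ∀ x, s 0 (s 0 x) ≠ x → ∀ j, 2 ≤ j → j + 1 < n → s j (s j x) = x := by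
    intro x hx j hj hjn
    rw [g0 x hx j hj hjn, g0 _ (b0 x hx) j hj hjn]
    by_contra hc
    exact hne ⟨x, hx, hc⟩
  have hd1 : ∀ x, s (n-2) (s (n-2) x) ≠ x → ∀ j, j + 3 < n → s j (s j x) = x := by
    intro x hx j hj
    rw [g1 x hx j hj, g1 _ (b1 x hx) j hj]
    by_contra hc
    exact hne ⟨x, hc, hx⟩
  have hNB' : NB (s (n-2)) := by
    obtain ⟨g, hg⟩ := h.exists_shiftk (n-2)
    have e0 := hg 0 (by omega)
    rw [zero_add] at e0
    exact NB_conj e0 hNB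
  have F := fun (i : ℕ) (hi : i + 1 < n) => badAll hn h hNB g0 hd0 hi
  have R := fun (i : ℕ) (hi : i + 1 < n) => badAll hn h.rev (by simpa using hNB')
    (by intro x hx j hj hjn; simpa using g1' x (by simpa using hx) j hj hjn)
    (by intro x hx j hj hjn; exact hd1 x (by simpa using hx) (n-2-j) (by omega)) hi
  have far : ∀ i j, i + 1 < n → j + 1 < n → (i + 2 ≤ j ∨ j + 2 ≤ i) → ∀ x, s i (s i x) ≠ x →
      s j x = s i (s i x) := by
    intro i j hi hj hij x hx
    rcases hij with hij | hij
    · exact ((F i hi).1 x hx).1 j hij hj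
    · have := ((R (n-2-i) (by omega)).1 x (by
        rw [show n - 2 - (n-2-i) = i by omega]; exact hx)).1 (n-2-j) (by omega) (by omega)
      rwa [show n - 2 - (n-2-i) = i by omega, show n - 2 - (n-2-j) = j by omega] at this
  obtain ⟨x0, hx0⟩ := hsq
  have hQne : ∀ i, i + 1 < n → ∃ x, s i (s i x) ≠ x := by
    intro i hi
    obtain ⟨g, hg⟩ := h.exists_shiftk i
    have e0 := hg 0 (by omega)
    rw [zero_add] at e0
    refine ⟨g x0, ?_⟩
    rw [conj_apply e0, conj_apply e0]
    exact fun hh => hx0 (g.injective hh)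
  have nofix : ∀ i, i + 1 < n → ∀ y, s i y ≠ y := by
    intro i hi
    obtain ⟨x, hx⟩ := hQne i hi
    exact (F i hi).2 x hx
  have up : ∀ i z, s i (s i z) ≠ z → s i (s i (s i z)) ≠ s i z :=
    fun i z hz hh => hz ((s i).injective hh)
  have dis : ∀ i j, i + 2 ≤ j → j + 1 < n → ∀ x, s i (s i x) ≠ x → s j (s j x) = x := by
    intro i j hij hj x hx
    have q := ((F i (by omega)).1 x hx).2.1
    rw [far i j (by omega) hj (Or.inl hij) x hx,
      far i j (by omega) hj (Or.inl hij) _ (up i _ (up i _ hx)), q]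
  have h5 : ∀ i, i + 2 < n → ∀ x, s i (s i x) ≠ x → s (i+1) (s (i+1) x) ≠ x →
      s i (s i x) = s (i+1) (s (i+1) x) := by
    intro i hi x hx hx2
    by_cases hi4 : i + 4 < n
    · rw [← far i (i+3) (by omega) (by omega) (by omega) x hx,
        ← far (i+1) (i+3) (by omega) (by omega) (by omega) x hx2]
    · rw [← far i (i-2) (by omega) (by omega) (by omega) x hx,
        ← far (i+1) (i-2) (by omega) (by omega) (by omega) x hx2]
  -- transport statements about adjacent pairs
  have tr : ∀ (P : Perm X → Perm X → Prop), (∀ g a b, P a b → P (g * a * g⁻¹) (g * b * g⁻¹)) →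
      ∀ i, i + 2 < n → ∀ k, k + 2 < n → P (s i) (s (i+1)) → P (s k) (s (k+1)) := by
    intro P hP i hi k hk hPi
    obtain ⟨g, hg⟩ := h.exists_shiftk i
    obtain ⟨g', hg'⟩ := h.exists_shiftk k
    have a0 := hg 0 (by omega)
    have a1 := hg 1 (by omega)
    have b0 := hg' 0 (by omega)
    have b1 := hg' 1 (by omega)
    rw [zero_add] at a0 b0
    rw [add_comm 1] at a1 b1
    rw [← a0, ← a1] at hPi
    have q := hP g⁻¹ _ _ hPi
    rw [← b0, ← b1]
    apply hP g'
    convert q using 1 <;> group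
  have nsub : ∀ i, i + 2 < n → ∃ x, s i (s i x) ≠ x ∧ s (i+1) (s (i+1) x) = x := by
    intro i hi
    by_contra hc
    push Not at hc
    have := tr (fun a b => ∀ x, a (a x) ≠ x → b (b x) ≠ x) (by
      intro g a b hab x hx
      obtain ⟨y, rfl⟩ := g.surjective x
      simp only [conj_apply (g := g) rfl, ne_eq, g.injective.eq_iff] at hx ⊢
      exact hab y hx) i hi
    have q0 := this 0 (by omega) hc x0 hx0
    have q1 := this 1 (by omega) hc x0 q0
    exact q1 (dis 0 2 (by omega) (by omega) x0 hx0)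
  have nsub' : ∀ i, i + 2 < n → ∃ x, s (i+1) (s (i+1) x) ≠ x ∧ s i (s i x) = x := by
    intro i hi
    by_contra hc
    push Not at hc
    have := tr (fun a b => ∀ x, b (b x) ≠ x → a (a x) ≠ x) (by
      intro g a b hab x hx
      obtain ⟨y, rfl⟩ := g.surjective x
      simp only [conj_apply (g := g) rfl, ne_eq, g.injective.eq_iff] at hx ⊢
      exact hab y hx) i hi
    obtain ⟨y, hy⟩ := hQne 2 (by omega)
    have q1 := this 1 (by omega) hc y hy
    have q0 := this 0 (by omega) hc y q1
    exact hy (dis 0 2 (by omega) (by omega) y q0)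
  have meet : ∀ i, i + 2 < n → ∃ x, s i (s i x) ≠ x ∧ s (i+1) (s (i+1) x) ≠ x := by
    intro i hi
    by_contra hc
    push Not at hc
    have adj := tr (fun a b => ∀ x, a (a x) ≠ x → b (b x) = x) (by
      intro g a b hab x hx
      obtain ⟨y, rfl⟩ := g.surjective x
      simp only [conj_apply (g := g) rfl, ne_eq, g.injective.eq_iff] at hx ⊢
      exact hab y hx) i hi
    have hdj : ∀ i j, i < j → j + 1 < n → ∀ x, s i (s i x) ≠ x → s j (s j x) = x := by
      intro i j hij hj
      by_cases c : j = i + 1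
      · subst c; exact adj i (by omega) hc
      · exact dis i j (by omega) hj
    have hcard : ∀ i ∈ Finset.range (n-1), 4 ≤ (Finset.univ.filter (fun x => s i (s i x) ≠ x)).card := by
      intro i hi
      rw [Finset.mem_range] at hi
      obtain ⟨x, hx⟩ := hQne i (by omega)
      have ia := (s i).injective
      have hx1 : s i x ≠ x := nofix i (by omega) x
      have h3 : s i (s i (s i x)) ≠ x := by
        intro h3
        have := ((F i (by omega)).1 x hx).2.1
        rw [h3] at this
        exact hx1 this
      have hl : [x, s i x, s i (s i x), s i (s i (s i x))].Nodup := by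
        simp only [List.nodup_cons, List.mem_cons, List.not_mem_nil, not_or, or_false,
          not_false_eq_true, List.nodup_nil, and_true]
        exact ⟨⟨hx1.symm, hx.symm, h3.symm⟩, ⟨fun hh => hx1 (ia hh).symm, fun hh => hx (ia hh).symm⟩,
          fun hh => hx1 (ia (ia hh)).symm⟩
      have u1 := up i x hx
      have u2 := up i _ u1
      have u3 := up i _ u2
      exact card_ge hl (A := Finset.univ.filter (fun x => s i (s i x) ≠ x)) (by
        intro z hz
        simp only [List.mem_cons, List.not_mem_nil, or_false] at hz
        simp only [Finset.mem_filter, Finset.mem_univ, true_and]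
        rcases hz with rfl | rfl | rfl | rfl <;> assumption)
    have hb := Finset.card_biUnion (s := Finset.range (n-1))
      (t := fun i => Finset.univ.filter (fun x => s i (s i x) ≠ x)) (by
        intro i hi j hj hij
        simp only [Finset.mem_range, Finset.mem_coe] at hi hj
        rw [Function.onFun, Finset.disjoint_left]
        intro x hx hy
        simp only [Finset.mem_filter, Finset.mem_univ, true_and] at hx hy
        rcases lt_or_gt_of_ne hij with c | c
        · exact hy (hdj i j c (by omega) x hx)
        · exact hx (hdj j i c (by omega) x hy))
    have h2 := Finset.card_nsmul_le_sum _ _ _ hcard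
    rw [← hb, Finset.card_range, smul_eq_mul] at h2
    have h3 := h2.trans (Finset.card_le_univ _)
    omega
  have gen3 : ∀ i j, i + 1 < n → j + 1 < n →
      (∀ x, s i (s i x) ≠ x → s j (s j x) ≠ x → s i (s i x) = s j (s j x)) →
      (∃ x, s i (s i x) ≠ x ∧ s j (s j x) = x) → (∃ x, s i (s i x) ≠ x ∧ s j (s j x) ≠ x) →
      ∀ x, s i (s i x) ≠ x → (s j (s j (s i x)) ≠ s i x ↔ ¬ (s j (s j x) ≠ x)) := by
    rintro i j hi hj h5 ⟨y, hy1, hy2⟩ ⟨z, hz1, hz2⟩ x hx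
    have cl : ∀ x, s i (s i x) ≠ x → s j (s j x) ≠ x → s j (s j (s i (s i x))) ≠ s i (s i x) := by
      intro x h1 h2
      rw [h5 x h1 h2]
      exact up j _ (up j _ h2)
    have q := ((F i hi).1 x hx).2.1
    constructor
    · intro h1 h2
      have k2 := cl x hx h2
      have k3 := cl _ (up i x hx) h1
      rcases ((F i hi).1 x hx).2.2 y hy1 with rfl | rfl | rfl | rfl
      · exact h2 hy2
      · exact h1 hy2
      · exact k2 hy2
      · exact k3 hy2
    · intro h2
      rcases ((F i hi).1 x hx).2.2 z hz1 with rfl | rfl | rfl | rfl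
      · exact absurd hz2 h2
      · exact hz2
      · have := cl _ hz1 hz2
        rw [q] at this
        exact absurd this h2
      · have := cl _ hz1 hz2
        rw [q] at this
        exact this
  obtain ⟨e, he1, he2, he3⟩ := labelling (n := n) (by omega) (s := s)
    (Q := fun i => {x | s i (s i x) ≠ x})
    (fun i _ x => not_congr (s i).injective.eq_iff)
    (fun i j hij hj x hx hx2 => hx2 (dis i j hij hj x hx))
    (fun i hi x hx => gen3 i (i+1) (by omega) (by omega) (h5 i hi) (nsub i hi) (meet i hi) x hx)
    (fun i hi x hx => gen3 (i+1) i (by omega) (by omega) (fun x h1 h2 => (h5 i hi x h2 h1).symm)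
      (nsub' i hi) (by obtain ⟨x, a, b⟩ := meet i hi; exact ⟨x, b, a⟩) x hx)
    (fun i hi x hx => ⟨hx, ((F i hi).1 x hx).2.1⟩)
    (fun i hi x hx hx2 => h5 i hi x hx hx2)
    (by
      obtain ⟨x, a, b⟩ := nsub 0 (by omega)
      exact ⟨x, a, fun hh => hh b⟩)
  have r : ∀ j k, j + 1 < n → (k = j ∨ k = j + 1) → ∀ ε, s j (s j (e k ε)) = e k (!ε) := by
    rintro j k hj (rfl | rfl) ε
    · rw [(he2 k hj ε).1, (he2 k hj _).2]
    · rw [(he2 j hj ε).2, (he2 j hj _).1]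
  have fl : ∀ i k j, i + 1 < n → k < n → j + 1 < n → (k = j ∨ k = j + 1) →
      (i + 2 ≤ j ∨ j + 2 ≤ i) → ∀ ε, s i (e k ε) = e k (!ε) := by
    intro i k j hi hk hj hkj hij ε
    rw [far j i hj hi (by omega) _ ((he3 j k hj hk ε).2 (by omega)), r j k hj hkj]
  have fl2 : ∀ i k, i + 1 < n → k < n → k ≠ i → k ≠ i + 1 → ¬ (i = 1 ∧ k = 0) →
      ¬ (i + 3 = n ∧ k + 1 = n) → ∀ ε, s i (e k ε) = e k (!ε) := by
    intro i k hi hk h1 h2 h3 h4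
    by_cases c : k + 1 < n ∧ (i + 2 ≤ k ∨ k + 2 ≤ i)
    · exact fl i k k hi hk c.1 (Or.inl rfl) c.2
    · exact fl i k (k-1) hi hk (by omega) (by omega) (by omega)
  have surj := lab_surj hX he1
  refine ⟨e, he1, ?_⟩
  intro i hi k hk ε
  split_ifs with c1 c2
  · subst c1; exact (he2 k hi ε).1
  · subst c2; simpa using (he2 i hi ε).2
  · rw [Bool.true_xor]
    by_cases c : ¬ (i = 1 ∧ k = 0) ∧ ¬ (i + 3 = n ∧ k + 1 = n)
    · exact fl2 i k hi hk c1 c2 c.1 c.2 ε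
    obtain ⟨k', δ, hk', hkδ⟩ := surj (s i (e k ε))
    by_cases hkk : k' = k
    · subst hkk
      have : δ ≠ ε := by
        rintro rfl
        exact nofix i hi _ hkδ.symm
      have : δ = !ε := by
        clear * - this
        revert this; revert ε δ; decide
      rw [← hkδ, this]
    · exfalso
      by_cases d1 : k' = i
      · subst d1
        rw [← (he2 k' hi δ).2] at hkδ
        have := he1 _ _ _ _ (by omega) hk ((s k').injective hkδ)
        omega
      by_cases d2 : k' = i + 1
      · subst d2
        have := (he2 i hi (!δ)).1
        rw [Bool.not_not] at this
        rw [← this] at hkδ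
        have := he1 _ _ _ _ (by omega) hk ((s i).injective hkδ)
        omega
      have := fl2 i k' hi hk' d1 d2 (by omega) (by omega) (!δ)
      rw [Bool.not_not] at this
      rw [← this] at hkδ
      have := he1 _ _ _ _ (by omega) hk ((s i).injective hkδ)
      omega

/-- the case of generators which are not involutions -/
theorem caseII {n : ℕ} (hn : 7 ≤ n) (hX : Fintype.card X = 2 * n) {s : ℕ → Perm X} (h : Br n s)
    (hT : ∀ Z : Set X, Z.Nonempty → (∀ i, i + 1 < n → ∀ x ∈ Z, s i x ∈ Z) → Z = Set.univ)
    (hsq : ∃ x, s 0 (s 0 x) ≠ x) :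
    (∀ i j, i + 1 < n → j + 1 < n → s i = s j) ∨ HasLab n s false false ∨ HasLab n s false true := by
  by_cases hNB : NB (s 0)
  · rcases caseBad hn hX h hT hNB hsq with a | a
    · exact Or.inl a
    · exact Or.inr (Or.inr a)
  have g0 := (good_or hn hX h).resolve_right hNB
  have g1 := (good_or hn hX h.rev).resolve_right (by
    intro hh
    apply hNB
    obtain ⟨g, hg⟩ := h.exists_shiftk (n-2)
    have e0 := hg 0 (by omega)
    rw [zero_add] at e0
    simp only [Nat.sub_zero] at hh
    exact NB_conj (g := g⁻¹) (by rw [← e0]; group) hh)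
  rcases caseGood hn hX h hT g0 (by
    intro x hx j hj
    have := g1 x (by simpa using hx) (n-2-j) (by omega) (by omega)
    rw [show n-2-(n-2-j) = j by omega] at this
    simpa using this) hsq with a | a
  · exact Or.inl a
  · exact Or.inr (Or.inl a)

end
end LinBr
end

section
open Equiv Equiv.Perm
namespace LinBr

section cox
variable {K : Type} [Group K]

/-- the coset representatives -/
def vv (t : ℕ → K) (m : ℕ) : ℕ → K
  | 0 => 1
  | j+1 => t (m-j-1) * vv t m j

theorem vv_comm {t : ℕ → K} {m : ℕ} (h : Br (m+1) t) (j i : ℕ) (hj : j ≤ m) (hi : i + 2 ≤ m - j + 0) :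
    t i * vv t m j = vv t m j * t i := by
  induction j with
  | zero => simp [vv]
  | succ j ih =>
    have h1 := ih (by omega) (by omega)
    have h2 := h.comm i (m-j-1) (by omega) (by omega)
    rw [vv, ← mul_assoc, h2, mul_assoc, h1, mul_assoc]

theorem vv_shift {t : ℕ → K} {m : ℕ} (h : Br (m+1) t) (j i : ℕ) (hj : j ≤ m) (hi : m - j < i)
    (him : i < m) : t i * vv t m j = vv t m j * t (i-1) := by
  induction j with
  | zero => omega
  | succ j ih =>
    by_cases c : m - j < i
    · have h1 := ih (by omega) c
      have h2 := h.comm (m-j-1) i (by omega) (by omega)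
      rw [vv, ← mul_assoc, ← h2, mul_assoc, h1, mul_assoc]
    · obtain ⟨l, rfl⟩ : ∃ l, j = l + 1 := ⟨j - 1, by omega⟩
      have h1 := vv_comm h l (i-1) (by omega) (by omega)
      have h2 := h.braid (i-1) (by omega)
      rw [show i - 1 + 1 = i by omega] at h2
      rw [vv, vv, show m - (l+1) - 1 = i - 1 by omega, show m - l - 1 = i by omega]
      calc t i * (t (i-1) * (t i * vv t m l)) = (t i * t (i-1) * t i) * vv t m l := by group
        _ = t (i-1) * t i * (t (i-1) * vv t m l) := by rw [← h2]; group
        _ = _ := by rw [h1]; group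

theorem exists_finset [DecidableEq K] {t : ℕ → K} (m : ℕ) (h : Br m t)
    (hinv : ∀ i, i + 1 < m → t i * t i = 1) :
    ∃ A : Finset K, A.card ≤ m.factorial ∧ 1 ∈ A ∧ ∀ i, i + 1 < m → ∀ a ∈ A, t i * a ∈ A := by
  induction m with
  | zero => exact ⟨{1}, by simp, by simp, by intro i hi; omega⟩
  | succ m ih =>
    obtain ⟨A, hA, h1, hcl⟩ := ih (h.mono (by omega)) (fun i hi => hinv i (by omega))
    refine ⟨(Finset.range (m+1) ×ˢ A).image (fun p => vv t m p.1 * p.2), ?_, ?_, ?_⟩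
    · refine Finset.card_image_le.trans ?_
      rw [Finset.card_product, Finset.card_range, Nat.factorial_succ]
      exact Nat.mul_le_mul_left _ hA
    · exact Finset.mem_image.2 ⟨(0, 1), by simp [h1], by simp [vv]⟩
    · intro i hi x hx
      obtain ⟨⟨j, a⟩, hja, rfl⟩ := Finset.mem_image.1 hx
      simp only [Finset.mem_product, Finset.mem_range] at hja
      obtain ⟨hj, ha⟩ := hja
      have mk : ∀ j a, j < m + 1 → a ∈ A →
          vv t m j * a ∈ (Finset.range (m+1) ×ˢ A).image (fun p => vv t m p.1 * p.2) := by
        intro j a hj ha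
        exact Finset.mem_image.2 ⟨(j, a), by simp [ha, hj], rfl⟩
      simp only
      by_cases c1 : i + 2 ≤ m - j
      · rw [← mul_assoc, vv_comm h j i (by omega) c1, mul_assoc]
        exact mk _ _ hj (hcl i (by omega) a ha)
      by_cases c2 : i + 1 = m - j
      · have : t i * vv t m j = vv t m (j+1) := by
          rw [vv, show m - j - 1 = i by omega]
        rw [← mul_assoc, this]
        exact mk _ _ (by omega) ha
      by_cases c3 : i = m - j
      · obtain ⟨l, rfl⟩ : ∃ l, j = l + 1 := ⟨j - 1, by omega⟩
        have : t i * vv t m (l+1) = vv t m l := by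
          rw [vv, show m - l - 1 = i by omega, ← mul_assoc, hinv i hi, one_mul]
        rw [← mul_assoc, this]
        exact mk _ _ (by omega) ha
      · rw [← mul_assoc, vv_shift h j i (by omega) (by omega) (by omega), mul_assoc]
        exact mk _ _ hj (hcl (i-1) (by omega) a ha)

end cox

/-- adjacent transpositions -/
def adj (n i : ℕ) : Perm (Fin n) :=
  if h : i + 1 < n then swap ⟨i, by omega⟩ ⟨i+1, h⟩ else 1

theorem adj_br (n : ℕ) : Br n (adj n) where
  comm i j hij hj := by
    rw [adj, adj, dif_pos (by omega), dif_pos hj]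
    apply Equiv.Perm.Disjoint.commute
    intro x
    by_cases h1 : x = ⟨i, by omega⟩ ∨ x = ⟨i+1, by omega⟩
    · right
      apply swap_apply_of_ne_of_ne
      · rcases h1 with rfl | rfl <;> simp [Fin.ext_iff] <;> omega
      · rcases h1 with rfl | rfl <;> simp [Fin.ext_iff] <;> omega
    · left
      push Not at h1
      exact swap_apply_of_ne_of_ne h1.1 h1.2
  braid i hi := by
    rw [adj, adj, dif_pos (by omega), dif_pos (by omega)]
    rw [swap_mul_swap_mul_swap (by simp [Fin.ext_iff]) (by simp [Fin.ext_iff]; omega)]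
    rw [swap_comm (⟨i, _⟩ : Fin n), swap_comm (⟨i+1, _⟩ : Fin n) ⟨i+1+1, _⟩]
    rw [swap_mul_swap_mul_swap (by simp [Fin.ext_iff]) (by simp [Fin.ext_iff]; omega)]
    rw [swap_comm]

theorem adj_inv (n i : ℕ) : adj n i * adj n i = 1 := by
  rw [adj]; split_ifs <;> simp

theorem adj_closure (n : ℕ) : Subgroup.closure {g | ∃ i, i + 1 < n ∧ g = adj n i} = ⊤ := by
  cases n with
  | zero => exact Subsingleton.elim _ _
  | succ n =>
    rw [eq_top_iff]
    intro g _
    have : g ∈ Submonoid.closure (Set.range fun i : Fin n ↦ swap i.castSucc i.succ) := by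
      rw [mclosure_swap_castSucc_succ]; trivial
    have h2 : Submonoid.closure (Set.range fun i : Fin n ↦ swap i.castSucc i.succ) ≤
        (Subgroup.closure {g | ∃ i, i + 1 < n + 1 ∧ g = adj (n+1) i}).toSubmonoid := by
      rw [Submonoid.closure_le]
      rintro _ ⟨i, rfl⟩
      apply Subgroup.subset_closure
      refine ⟨i, by omega, ?_⟩
      rw [adj, dif_pos (by omega)]
      rfl
    exact h2 this

theorem exists_hom {G : Type} [Group G] {n : ℕ} {s : ℕ → G} (h : Br n s)
    (hinv : ∀ i, i + 1 < n → s i * s i = 1) :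
    ∃ φ : Perm (Fin n) →* G, ∀ i, i + 1 < n → φ (adj n i) = s i := by
  classical
  set t : ℕ → G × Perm (Fin n) := fun i => (s i, adj n i) with ht
  have hb : Br n t := ⟨fun i j hij hj => Prod.ext (h.comm i j hij hj) ((adj_br n).comm i j hij hj),
    fun i hi => Prod.ext (h.braid i hi) ((adj_br n).braid i hi)⟩
  have hti : ∀ i, i + 1 < n → t i * t i = 1 :=
    fun i hi => Prod.ext (hinv i hi) (adj_inv n i)
  obtain ⟨A, hA, h1, hcl⟩ := exists_finset n hb hti
  set H := Subgroup.closure {g | ∃ i, i + 1 < n ∧ g = t i} with hH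
  have hsub : ∀ g ∈ H, ∀ a ∈ A, g * a ∈ A := by
    intro g hg
    induction hg using Subgroup.closure_induction with
    | mem x hx => obtain ⟨i, hi, rfl⟩ := hx; exact hcl i hi
    | one => intro a ha; simpa using ha
    | mul x y _ _ hx hy => intro a ha; rw [mul_assoc]; exact hx _ (hy a ha)
    | inv x _ hx =>
      intro a ha
      have : A.image (fun a => x * a) = A := by
        apply Finset.eq_of_subset_of_card_le
        · intro y hy
          obtain ⟨z, hz, rfl⟩ := Finset.mem_image.1 hy
          exact hx z hz
        · rw [Finset.card_image_of_injective _ (mul_right_injective x)]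
      rw [← this] at ha
      obtain ⟨z, hz, rfl⟩ := Finset.mem_image.1 ha
      simpa using hz
  have hHA : (H : Set (G × Perm (Fin n))) ⊆ A := by
    intro g hg
    simpa using hsub g hg 1 h1
  have hfin : Finite H := (A.finite_toSet.subset hHA).to_subtype
  have hcard : Nat.card H ≤ n.factorial := by
    refine le_trans ?_ hA
    rw [← Set.ncard_coe_finset]
    exact Set.ncard_le_ncard hHA A.finite_toSet
  set pr : H →* Perm (Fin n) := (MonoidHom.snd G (Perm (Fin n))).comp H.subtype with hpr
  have hsurj : Function.Surjective pr := by
    rw [← MonoidHom.range_eq_top, eq_top_iff, ← adj_closure n, Subgroup.closure_le]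
    rintro _ ⟨i, hi, rfl⟩
    exact ⟨⟨t i, Subgroup.subset_closure ⟨i, hi, rfl⟩⟩, rfl⟩
  have hbij : Function.Bijective pr := by
    refine (Nat.bijective_iff_surjective_and_card _).2 ⟨hsurj, ?_⟩
    have h2 := Nat.card_le_card_of_surjective _ hsurj
    have h3 : Nat.card (Perm (Fin n)) = n.factorial := by
      rw [Nat.card_eq_fintype_card, Fintype.card_perm, Fintype.card_fin]
    omega
  set E := MulEquiv.ofBijective pr hbij
  refine ⟨((MonoidHom.fst G (Perm (Fin n))).comp H.subtype).comp E.symm.toMonoidHom, ?_⟩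
  intro i hi
  have : E.symm (adj n i) = ⟨t i, Subgroup.subset_closure ⟨i, hi, rfl⟩⟩ := by
    rw [MulEquiv.symm_apply_eq]; rfl
  change ((E.symm (adj n i) : H) : G × Perm (Fin n)).1 = s i
  rw [this]

end LinBr
end

section
open Equiv Equiv.Perm
namespace LinBr

section threecycles
variable {Y : Type} [DecidableEq Y]

/-- the three-cycle `i ↦ j ↦ k ↦ i` -/
def c3 (i j k : Y) : Perm Y := swap i j * swap j k

theorem c3_conj (g : Perm Y) (i j k : Y) : g * c3 i j k * g⁻¹ = c3 (g i) (g j) (g k) := by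
  rw [c3, c3, swap_apply_apply, swap_apply_apply]; group

theorem c3_inv {i j k : Y} (h1 : i ≠ j) (h2 : i ≠ k) (h3 : j ≠ k) : (c3 i j k)⁻¹ = c3 i k j := by
  rw [inv_eq_iff_mul_eq_one, c3, c3]
  ext x
  simp only [mul_apply, swap_apply_def, one_apply]
  split_ifs <;> simp_all

theorem c3_rot {i j k : Y} (h1 : i ≠ j) (h2 : i ≠ k) (h3 : j ≠ k) : c3 i j k = c3 j k i := by
  rw [c3, c3]
  ext x
  simp only [mul_apply, swap_apply_def]
  split_ifs <;> simp_all

theorem c3_1 {i j k : Y} (h1 : i ≠ j) (h2 : i ≠ k) (h3 : j ≠ k) : c3 i j k i = j := by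
  simp [c3, swap_apply_def, *]
theorem c3_2 {i j k : Y} (h1 : i ≠ j) (h2 : i ≠ k) (h3 : j ≠ k) : c3 i j k j = k := by
  rw [c3_rot h1 h2 h3]; exact c3_1 h3 h1.symm h2.symm
theorem c3_3 {i j k : Y} (h1 : i ≠ j) (h2 : i ≠ k) (h3 : j ≠ k) : c3 i j k k = i := by
  simp [c3, swap_apply_def, *]
theorem c3_4 {i j k x : Y} (h1 : x ≠ i) (h2 : x ≠ j) (h3 : x ≠ k) : c3 i j k x = x := by
  simp [c3, swap_apply_def, *]

/-- distinct triple with its three-cycle in `H` -/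
def TT (H : Subgroup (Perm Y)) (i j k : Y) : Prop := i ≠ j ∧ i ≠ k ∧ j ≠ k ∧ c3 i j k ∈ H

variable {H : Subgroup (Perm Y)}

theorem TT.flip {i j k : Y} (h : TT H i j k) : TT H i k j :=
  ⟨h.2.1, h.1, h.2.2.1.symm, by rw [← c3_inv h.1 h.2.1 h.2.2.1]; exact H.inv_mem h.2.2.2⟩

theorem TT.rot {i j k : Y} (h : TT H i j k) : TT H j k i :=
  ⟨h.2.2.1, h.1.symm, h.2.1.symm, by rw [← c3_rot h.1 h.2.1 h.2.2.1]; exact h.2.2.2⟩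

theorem TT.conj {i j k : Y} (h : TT H i j k) {g : Perm Y} (hg : g ∈ H) :
    TT H (g i) (g j) (g k) :=
  ⟨g.injective.ne h.1, g.injective.ne h.2.1, g.injective.ne h.2.2.1, by
    rw [← c3_conj]; exact H.mul_mem (H.mul_mem hg h.2.2.2) (H.inv_mem hg)⟩

/-- all triples of `A` are in `H` -/
def Full (H : Subgroup (Perm Y)) (A : Finset Y) : Prop :=
  ∀ i ∈ A, ∀ j ∈ A, ∀ k ∈ A, i ≠ j → i ≠ k → j ≠ k → TT H i j k

theorem rep {A : Finset Y} (hA : Full H A) {b u v w : Y} (hb : b ∉ A) (hu : u ∈ A) (hv : v ∈ A)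
    (hw : w ∈ A) (huw : u ≠ w) (hvw : v ≠ w) (h : TT H b u v) : TT H b u w := by
  have huv := h.2.2.1
  have hbu := h.1
  have hbv := h.2.1
  have hbw : b ≠ w := fun h => hb (h ▸ hw)
  have t := hA u hu v hv w hw huv huw hvw
  have := h.flip.conj (t.flip.2.2.2)
  rw [c3_4 hbu hbw hbv, c3_1 huw huv hvw.symm, c3_3 huw huv hvw.symm] at this
  exact this

theorem spread {A : Finset Y} (hA : Full H A) {b u v : Y} (hb : b ∉ A) (hu : u ∈ A) (hv : v ∈ A)
    (h : TT H b u v) : ∀ x ∈ A, ∀ y ∈ A, x ≠ y → TT H b x y := by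
  intro x hx y hy hxy
  have huv := h.2.2.1
  by_cases c1 : u = x
  · subst c1
    by_cases c2 : v = y
    · subst c2; exact h
    · exact rep hA hb hu hv hy hxy c2 h
  by_cases c2 : v = x
  · subst c2
    by_cases c3 : u = y
    · subst c3; exact h.flip
    · exact rep hA hb hv hu hy hxy c3 h.flip
  have h1 := rep hA hb hu hv hx c1 c2 h
  by_cases c3 : u = y
  · subst c3; exact h1.flip
  · exact rep hA hb hx hu hy hxy c3 h1.flip

theorem full_insert {A : Finset Y} (hA : Full H A) (h3 : 3 ≤ A.card) {c b m : Y} (hc : c ∈ A)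
    (hb : b ∉ A) (h : TT H c b m) : Full H (insert b A) := by
  have key : ∃ u ∈ A, ∃ v ∈ A, TT H b u v := by
    by_cases hm : m ∈ A
    · exact ⟨m, hm, c, hc, h.rot⟩
    · have : 1 < (A.erase c).card := by rw [Finset.card_erase_of_mem hc]; omega
      obtain ⟨x, hx, y, hy, hxy⟩ := Finset.one_lt_card.1 this
      rw [Finset.mem_erase] at hx hy
      have t := hA c hc x hx.2 y hy.2 hx.1.symm hy.1.symm hxy
      have t2 := t.conj h.2.2.2
      have a1 : x ≠ b := fun e => hb (e ▸ hx.2)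
      have a2 : x ≠ m := fun e => hm (e ▸ hx.2)
      have a3 : y ≠ b := fun e => hb (e ▸ hy.2)
      have a4 : y ≠ m := fun e => hm (e ▸ hy.2)
      rw [c3_1 h.1 h.2.1 h.2.2.1, c3_4 hx.1 a1 a2, c3_4 hy.1 a3 a4] at t2
      exact ⟨x, hx.2, y, hy.2, t2⟩
  obtain ⟨u, hu, v, hv, huv⟩ := key
  have S := spread hA hb hu hv huv
  intro i hi j hj k hk hij hik hjk
  rw [Finset.mem_insert] at hi hj hk
  rcases hi with rfl | hi
  · exact S j (hj.resolve_left hij.symm) k (hk.resolve_left hik.symm) hjk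
  rcases hj with rfl | hj
  · exact (S k (hk.resolve_left hjk.symm) i hi hik.symm).rot.rot
  rcases hk with rfl | hk
  · exact (S i hi j hj hij).rot
  exact hA i hi j hj k hk hij hik hjk

theorem full_max [Fintype Y] {i j k : Y} (h : TT H i j k) : ∃ A : Finset Y, Full H A ∧ 3 ≤ A.card ∧
    ∀ g ∈ H, (∃ c ∈ A, g c ∈ A) → ∀ x ∈ A, g x ∈ A := by
  classical
  have h0 : Full H {i, j, k} := by
    intro a ha b hb c hc h1 h2 h3
    simp only [Finset.mem_insert, Finset.mem_singleton] at ha hb hc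
    have h2 := h.rot
    have h3 := h.rot.rot
    have h4 := h.flip
    have h5 := h2.flip
    have h6 := h3.flip
    rcases ha with rfl | rfl | rfl <;> rcases hb with rfl | rfl | rfl <;>
      rcases hc with rfl | rfl | rfl <;> first | contradiction | assumption
  obtain ⟨A, hA, hmax⟩ := Finset.exists_max_image
    (Finset.univ.filter (fun A : Finset Y => Full H A)) Finset.card ⟨_, by simpa using h0⟩
  simp only [Finset.mem_filter, Finset.mem_univ, true_and] at hA hmax
  have h3 : 3 ≤ A.card := by
    have := hmax _ h0
    rwa [Finset.card_eq_three.2 ⟨i, j, k, h.1, h.2.1, h.2.2.1, rfl⟩] at this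
  refine ⟨A, hA, h3, ?_⟩
  rintro g hg ⟨c, hc, hgc⟩ x hx
  by_contra hn
  have hcx : c ≠ x := fun e => hn (e ▸ hgc)
  obtain ⟨m, hm, hmc, hmx⟩ : ∃ m ∈ A, m ≠ c ∧ m ≠ x := by
    by_contra hcon
    push Not at hcon
    have : A ⊆ {c, x} := by
      intro m hm
      by_cases e : m = c
      · simp [e]
      · simp [hcon m hm e]
    have := (Finset.card_le_card this).trans Finset.card_le_two
    omega
  have t := (hA c hc x hx m hm hcx hmc.symm hmx.symm).conj hg
  have := hmax _ (full_insert hA h3 hgc hn t)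
  rw [Finset.card_insert_of_notMem hn] at this
  omega

/-- existence of a three-cycle from a small base -/
theorem comm_c3 {Γ : Finset Y} {p : Y} (hp : p ∉ Γ) {g h : Perm Y}
    (hg : ∀ x, x ∉ Γ → x ≠ p → g x = x) (hh : ∀ x, x ∈ Γ → h x = x) (hgp : g p ≠ p)
    (hhp : h p ≠ p) : p ≠ g p ∧ p ≠ h p ∧ g p ≠ h p ∧ g * h * g⁻¹ * h⁻¹ = c3 p (g p) (h p) := by
  have gG : g p ∈ Γ := by
    by_contra hc
    exact hgp (g.injective (hg _ hc hgp))
  have hG : h p ∉ Γ := by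
    intro hc
    exact hhp (h.injective (hh _ hc))
  have hgh : g p ≠ h p := fun e => hG (e ▸ gG)
  refine ⟨hgp.symm, hhp.symm, hgh, ?_⟩
  rw [mul_inv_eq_iff_eq_mul, mul_inv_eq_iff_eq_mul]
  ext x
  simp only [mul_apply]
  by_cases hx : x = p
  · subst hx
    rw [hh _ gG, c3_2 hgp.symm hhp.symm hgh, hg _ hG hhp]
  by_cases hxG : x ∈ Γ
  · rw [hh x hxG]
    by_cases e : g x = p
    · rw [e, c3_3 hgp.symm hhp.symm hgh]
    · have : g x ∈ Γ := by
        by_contra hc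
        exact hc (by rw [g.injective (hg _ hc e)]; exact hxG)
      have a1 : g x ≠ h p := fun e => hG (e ▸ this)
      rw [hh _ this, c3_4 e (fun e => hx (g.injective e)) a1]
  · rw [hg x hxG hx]
    by_cases e : h x = p
    · rw [e, c3_1 hgp.symm hhp.symm hgh]
    · have : h x ∉ Γ := by
        intro hc
        exact hxG (h.injective (hh _ hc) ▸ hc)
      have a1 : h x ≠ g p := fun e => this (e ▸ gG)
      rw [hg _ this e, c3_4 e a1 (fun e => hx (h.injective e))]

end threecycles
end LinBr
end

section
open Equiv Equiv.Perm
namespace LinBr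

/-- point stabiliser -/
def stab {n : ℕ} {X : Type} (φ : Perm (Fin n) →* Perm X) (x0 : X) : Subgroup (Perm (Fin n)) where
  carrier := {g | φ g x0 = x0}
  mul_mem' := by
    intro a b ha hb
    simp only [Set.mem_setOf_eq] at *
    rw [map_mul, mul_apply, hb, ha]
  one_mem' := by simp
  inv_mem' := by
    intro a ha
    simp only [Set.mem_setOf_eq] at *
    rw [map_inv, inv_eq_iff_eq, ha]

theorem mem_stab {n : ℕ} {X : Type} {φ : Perm (Fin n) →* Perm X} {x0 : X} {g : Perm (Fin n)} :
    g ∈ stab φ x0 ↔ φ g x0 = x0 := Iff.rfl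

theorem stab_of_eq {n : ℕ} {X : Type} {φ : Perm (Fin n) →* Perm X} {x0 : X} {g h : Perm (Fin n)}
    (e : φ g x0 = φ h x0) : h⁻¹ * g ∈ stab φ x0 := by
  rw [mem_stab, map_mul, mul_apply, e, map_inv, inv_eq_iff_eq]

theorem fact_bound {k : ℕ} (hk : 4 ≤ k) : 4 * k < k.factorial := by
  induction k, hk using Nat.le_induction with
  | base => decide
  | succ k hk ih => rw [Nat.factorial_succ]; nlinarith

theorem choose_bound (N : ℕ) : ∀ k, 2 ≤ k → k + 2 ≤ N → N.choose 2 ≤ N.choose k := by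
  induction N with
  | zero => intro k h1 h2; omega
  | succ N ih =>
    intro k h1 h2
    by_cases c : k = 2
    · rw [c]
    by_cases c2 : k + 2 = N + 1
    · rw [Nat.choose_symm_of_eq_add (show N + 1 = k + 2 by omega)]
    · obtain ⟨l, rfl⟩ : ∃ l, k = l + 1 := ⟨k - 1, by omega⟩
      rw [Nat.choose_succ_succ' N l, Nat.choose_succ_succ' N 1]
      change N.choose 1 + N.choose 2 ≤ _
      have h3 := ih l (by omega) (by omega)
      have h4 := ih (l+1) (by omega) (by omega)
      have : N.choose 1 ≤ N.choose 2 := by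
        rw [Nat.choose_one_right, Nat.choose_two_right, Nat.le_div_iff_mul_le (by norm_num)]
        exact Nat.mul_le_mul_left _ (by omega)
      omega

section
variable {X : Type} [Fintype X] {n : ℕ} (hn : 7 ≤ n) (hX : Fintype.card X = 2 * n)
  (φ : Perm (Fin n) →* Perm X) (x0 : X)

include hn hX
theorem exists_TT : ∃ i j k, TT (stab φ x0) i j k := by
  classical
  set P : Finset (Fin n) → Prop := fun Γ => ∀ g ∈ stab φ x0, (∀ x, x ∉ Γ → g x = x) → g = 1 with hP
  have h0 : P ∅ := by
    intro g _ h
    ext x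
    rw [h x (by simp)]; rfl
  obtain ⟨Γ, hΓ, hmax⟩ := Finset.exists_max_image
    (Finset.univ.filter (fun A : Finset (Fin n) => P A)) Finset.card ⟨_, by simpa using h0⟩
  simp only [Finset.mem_filter, Finset.mem_univ, true_and] at hΓ hmax
  have hf : Γ.card.factorial ≤ 2 * n := by
    have inj : Function.Injective
        (fun g : Perm {x // x ∈ Γ} => φ (ofSubtype g) x0) := by
      intro g h e
      have e1 := stab_of_eq e
      rw [← map_inv, ← map_mul] at e1
      have := hΓ _ e1 (fun x hx => ofSubtype_apply_of_not_mem _ hx)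
      rw [← map_one (ofSubtype : Perm {x // x ∈ Γ} →* _)] at this
      have := ofSubtype_injective this
      rw [inv_mul_eq_one] at this
      exact this.symm
    have := Fintype.card_le_of_injective _ inj
    rw [Fintype.card_perm, Fintype.card_coe, hX] at this
    exact this
  have h2 : 2 * Γ.card < n := by
    by_contra hc
    have := fact_bound (k := Γ.card) (by omega)
    omega
  have hΔ : ¬ P Γᶜ := by
    intro hc
    have := hmax _ hc
    rw [Finset.card_compl, Fintype.card_fin] at this
    omega
  simp only [hP] at hΔ
  push Not at hΔ
  obtain ⟨h, hhH, hh, hh1⟩ := hΔ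
  obtain ⟨p, hp⟩ : ∃ p, h p ≠ p := by
    by_contra hc
    push Not at hc
    exact hh1 (Equiv.ext hc)
  have hh' : ∀ x ∈ Γ, h x = x := fun x hx => hh x (by simpa using hx)
  have hpΓ : p ∉ Γ := fun hc => hp (hh' p hc)
  have hI : ¬ P (insert p Γ) := by
    intro hc
    have := hmax _ hc
    rw [Finset.card_insert_of_notMem hpΓ] at this
    omega
  simp only [hP] at hI
  push Not at hI
  obtain ⟨g, hgH, hg, hg1⟩ := hI
  have hg' : ∀ x, x ∉ Γ → x ≠ p → g x = x := fun x h1 h2 => hg x (by simp [h1, h2])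
  have hgp : g p ≠ p := by
    intro hc
    apply hg1
    apply hΓ g hgH
    intro x hx
    by_cases e : x = p
    · rw [e, hc]
    · exact hg' x hx e
  obtain ⟨a1, a2, a3, a4⟩ := comm_c3 hpΓ hg' hh' hgp hp
  refine ⟨_, _, _, a1, a2, a3, ?_⟩
  rw [← a4]
  exact mul_mem (mul_mem (mul_mem hgH hhH) (inv_mem hgH)) (inv_mem hhH)

theorem exists_big : ∃ A : Finset (Fin n), Full (stab φ x0) A ∧ n ≤ A.card + 1 ∧
    ∀ g ∈ stab φ x0, (∃ c ∈ A, g c ∈ A) → ∀ x ∈ A, g x ∈ A := by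
  classical
  obtain ⟨i, j, k, h⟩ := exists_TT hn hX φ x0
  obtain ⟨A, hA, h3, hinv⟩ := full_max h
  refine ⟨A, hA, ?_, hinv⟩
  by_contra hc
  have ex : ∀ S : Finset (Fin n), S.card = A.card → ∃ g : Perm (Fin n), ∀ x ∈ A, g x ∈ S := by
    intro S hS
    set e : {x // x ∈ A} ≃ {x // x ∈ S} := Finset.equivOfCardEq hS.symm
    refine ⟨e.extendSubtype, fun x hx => ?_⟩
    exact e.extendSubtype_mem x hx
  have im : ∀ (S : Finset (Fin n)) (g : Perm (Fin n)), S.card = A.card → (∀ x ∈ A, g x ∈ S) →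
      ∀ y ∈ S, g⁻¹ y ∈ A := by
    intro S g hS hg y hy
    have : A.image g = S := by
      apply Finset.eq_of_subset_of_card_le
      · intro y hy
        obtain ⟨z, hz, rfl⟩ := Finset.mem_image.1 hy
        exact hg z hz
      · rw [Finset.card_image_of_injective _ g.injective, hS]
    rw [← this] at hy
    obtain ⟨z, hz, rfl⟩ := Finset.mem_image.1 hy
    simpa using hz
  choose! G hG using ex
  set z : Fin n := ⟨0, by omega⟩
  set F := (Finset.univ.filter (fun S : Finset (Fin n) => S.card = A.card ∧ z ∈ S)) with hF
  have hFc : (n-1).choose (A.card - 1) ≤ F.card := by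
    have : (Finset.powersetCard (A.card - 1) (Finset.univ.erase z)).card =
        (n-1).choose (A.card - 1) := by
      rw [Finset.card_powersetCard, Finset.card_erase_of_mem (Finset.mem_univ _), Finset.card_univ,
        Fintype.card_fin]
    rw [← this]
    apply Finset.card_le_card_of_injOn (fun U => insert z U)
    · intro U hU
      simp only [Finset.mem_coe, Finset.mem_powersetCard] at hU
      have hz : z ∉ U := fun h => by simpa using hU.1 h
      simp only [hF, Finset.coe_filter, Set.mem_setOf_eq, Finset.mem_univ, true_and]
      rw [Finset.card_insert_of_notMem hz, hU.2]
      exact ⟨by omega, by simp⟩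
    · intro U hU V hV e
      simp only [Finset.mem_coe, Finset.mem_powersetCard] at hU hV
      have hz : z ∉ U := fun h => by simpa using hU.1 h
      have hz2 : z ∉ V := fun h => by simpa using hV.1 h
      simp only at e
      rw [← Finset.erase_insert hz, e, Finset.erase_insert hz2]
  have hFX : F.card ≤ 2 * n := by
    rw [← hX, ← Finset.card_univ]
    apply Finset.card_le_card_of_injOn (fun S => φ (G S) x0)
    · intro S _; simp
    · intro S hS T hT e
      simp only [hF, Finset.coe_filter, Set.mem_setOf_eq, Finset.mem_univ, true_and] at hS hT
      have e1 := stab_of_eq e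
      have e2 := hinv _ e1 ⟨(G S)⁻¹ z, im S _ hS.1 (hG S hS.1) z hS.2, by
        simpa using im T _ hT.1 (hG T hT.1) z hT.2⟩
      apply Finset.eq_of_subset_of_card_le
      · intro y hy
        have := hG T hT.1 _ (e2 _ (im S _ hS.1 (hG S hS.1) y hy))
        simpa using this
      · omega
  have hb := choose_bound (n-1) (A.card - 1) (by omega) (by omega)
  have h5 : 2 * n < (n-1).choose 2 := by
    obtain ⟨m, rfl⟩ : ∃ m, n = m + 7 := ⟨n - 7, by omega⟩
    rw [Nat.choose_two_right, Nat.lt_iff_add_one_le, Nat.le_div_iff_mul_le (by norm_num)]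
    simp only [Nat.add_sub_cancel, show m + 7 - 1 = m + 6 by omega, show m + 6 - 1 = m + 5 by omega]
    nlinarith
  omega

end
end LinBr
end

section
open Equiv Equiv.Perm
namespace LinBr

theorem swaps_mem {Y : Type} [DecidableEq Y] {H : Subgroup (Perm Y)} {p : Y}
    (hF : ∀ i j k, i ≠ p → j ≠ p → k ≠ p → i ≠ j → i ≠ k → j ≠ k → c3 i j k ∈ H)
    {x y u v : Y} (hx : x ≠ p) (hy : y ≠ p) (hu : u ≠ p) (hv : v ≠ p) (hxy : x ≠ y) (huv : u ≠ v) :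
    swap x y * swap u v ∈ H := by
  have share : ∀ a b c, a ≠ p → b ≠ p → c ≠ p → a ≠ b → b ≠ c → swap a b * swap b c ∈ H := by
    intro a b c ha hb hc hab hbc
    by_cases e : a = c
    · subst e; rw [swap_comm b a, swap_mul_self]; exact H.one_mem
    · exact hF a b c ha hb hc hab e hbc
  by_cases e : y = u
  · subst e; exact share x y v hx hy hv hxy huv
  · have h1 := share x y u hx hy hu hxy e
    have h2 := share y u v hy hu hv e huv
    have := H.mul_mem h1 h2
    rwa [mul_assoc, swap_mul_self_mul] at this

theorem even_mem {Y : Type} [DecidableEq Y] [Fintype Y] {H : Subgroup (Perm Y)} {p : Y}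
    (hF : ∀ i j k, i ≠ p → j ≠ p → k ≠ p → i ≠ j → i ≠ k → j ≠ k → c3 i j k ∈ H)
    {a b : Y} (ha : a ≠ p) (hb : b ≠ p) (hab : a ≠ b)
    {g : Perm Y} (hg : g p = p) (hs : sign g = 1) : g ∈ H := by
  have key : ∀ f : Perm {x // x ≠ p}, (sign f = 1 → ofSubtype f ∈ H) ∧
      (sign f = -1 → swap a b * ofSubtype f ∈ H) := by
    intro f
    induction f using swap_induction_on with
    | one =>
      refine ⟨fun _ => by rw [map_one]; exact H.one_mem, fun h => ?_⟩
      rw [map_one] at h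
      exact absurd h (by decide)
    | swap_mul f x y hxy ih =>
      rw [map_mul, map_mul, sign_swap hxy, ofSubtype_swap_eq]
      have hxy' : (x : Y) ≠ y := fun h => hxy (Subtype.ext h)
      constructor
      · intro h
        have h1 := ih.2 (by rw [← h]; simp)
        have h2 := H.mul_mem (swaps_mem hF x.2 y.2 ha hb hxy' hab) h1
        rwa [mul_assoc, swap_mul_self_mul] at h2
      · intro h
        have h1 := ih.1 (by simpa using h)
        rw [← mul_assoc]
        exact H.mul_mem (swaps_mem hF ha hb x.2 y.2 hab hxy') h1
  have hgp : ∀ x, x ≠ p ↔ g x ≠ p := by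
    intro x
    rw [not_iff_not]
    constructor
    · rintro rfl; exact hg
    · intro h; exact g.injective (h.trans hg.symm)
  have e : ofSubtype (g.subtypePerm (p := fun x => x ≠ p) (fun x => (hgp x).symm)) = g := by
    apply ofSubtype_subtypePerm
    intro x hx hxp
    exact hx (by rw [hxp, hg])
  rw [← e]
  apply (key _).1
  rw [← sign_ofSubtype, e, hs]

variable {X : Type} [Fintype X] [DecidableEq X]

theorem caseI {n : ℕ} (hn : 7 ≤ n) (hX : Fintype.card X = 2 * n) {s : ℕ → Perm X} (h : Br n s)
    (hT : ∀ Z : Set X, Z.Nonempty → (∀ i, i + 1 < n → ∀ x ∈ Z, s i x ∈ Z) → Z = Set.univ)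
    (hsq : ∀ x, s 0 (s 0 x) = x) :
    (∀ i j, i + 1 < n → j + 1 < n → s i = s j) ∨ HasLab n s true true := by
  have hinv : ∀ i, i + 1 < n → s i * s i = 1 := by
    intro i hi
    obtain ⟨g, hg⟩ := h.exists_shiftk i
    have e := hg 0 (by omega)
    rw [zero_add] at e
    have : s 0 * s 0 = 1 := by ext x; exact hsq x
    rw [← e]
    calc g * s 0 * g⁻¹ * (g * s 0 * g⁻¹) = g * (s 0 * s 0) * g⁻¹ := by group
      _ = 1 := by rw [this]; group
  obtain ⟨φ, hφ⟩ := exists_hom h hinv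
  have : Nonempty X := by
    rw [← Fintype.card_pos_iff]; omega
  obtain ⟨x0⟩ := this
  have htr : ∀ x, ∃ g, φ g x0 = x := by
    have := hT {x | ∃ g, φ g x0 = x} ⟨x0, 1, by simp⟩ (by
      rintro i hi x ⟨g, rfl⟩
      exact ⟨adj n i * g, by rw [map_mul, hφ i hi, mul_apply]⟩)
    intro x
    have hx : x ∈ {x | ∃ g, φ g x0 = x} := by rw [this]; trivial
    exact hx
  obtain ⟨A, hA, hAc, hAi⟩ := exists_big hn hX φ x0
  by_cases hall : ∀ p, p ∈ A
  · left
    have triv : ∀ i j k, i ≠ j → i ≠ k → j ≠ k → φ (c3 i j k) = 1 := by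
      intro i j k h1 h2 h3
      refine Equiv.ext (fun x => ?_)
      obtain ⟨g, rfl⟩ := htr x
      have t := hA (g⁻¹ i) (hall _) (g⁻¹ j) (hall _) (g⁻¹ k) (hall _) (by simpa using h1)
        (by simpa using h2) (by simpa using h3)
      have t2 := t.2.2.2
      rw [mem_stab] at t2
      have := c3_conj g (g⁻¹ i) (g⁻¹ j) (g⁻¹ k)
      rw [show g (g⁻¹ i) = i by simp, show g (g⁻¹ j) = j by simp, show g (g⁻¹ k) = k by simp] at this
      rw [← this, map_mul, map_mul, map_inv]
      rw [mul_apply, mul_apply, show (φ g)⁻¹ (φ g x0) = x0 by simp, t2]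
      rfl
    have step : ∀ i, i + 2 < n → s i = s (i+1) := by
      intro i hi
      have := triv ⟨i, by omega⟩ ⟨i+1, by omega⟩ ⟨i+2, by omega⟩ (by simp) (by simp) (by simp)
      have e : c3 (⟨i, by omega⟩ : Fin n) ⟨i+1, by omega⟩ ⟨i+2, by omega⟩ = adj n i * adj n (i+1) := by
        rw [adj, adj, dif_pos (by omega), dif_pos (by omega)]; rfl
      rw [e, map_mul, hφ i (by omega), hφ (i+1) (by omega)] at this
      rw [eq_inv_of_mul_eq_one_left this]
      exact (eq_inv_of_mul_eq_one_left (hinv (i+1) (by omega))).symm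
    have all0 : ∀ i, i + 1 < n → s i = s 0 := by
      intro i
      induction i with
      | zero => intro _; rfl
      | succ i ih => intro hi; rw [← step i (by omega), ih (by omega)]
    intro i j hi hj
    rw [all0 i hi, all0 j hj]
  · right
    push Not at hall
    obtain ⟨p, hp⟩ := hall
    have hAe : A = Finset.univ.erase p := by
      apply Finset.eq_of_subset_of_card_le
      · intro x hx
        simp only [Finset.mem_erase, Finset.mem_univ, and_true]
        rintro rfl; exact hp hx
      · rw [Finset.card_erase_of_mem (Finset.mem_univ _), Finset.card_univ, Fintype.card_fin]; omega
    have mA : ∀ x, x ∈ A ↔ x ≠ p := by intro x; rw [hAe]; simp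
    have two : ∀ q : Fin n, ∃ a, a ≠ p ∧ a ≠ q := by
      intro q
      by_contra hc
      push Not at hc
      have : (Finset.univ : Finset (Fin n)) ⊆ {p, q} := by
        intro x _
        by_cases e : x = p
        · simp [e]
        · simp [hc x e]
      have := (Finset.card_le_card this).trans Finset.card_le_two
      rw [Finset.card_univ, Fintype.card_fin] at this
      omega
    have fixp : ∀ g ∈ stab φ x0, g p = p := by
      intro g hg
      by_contra hc
      obtain ⟨c, hc1, hc2⟩ := two (g⁻¹ p)
      have hc3 : g c ≠ p := fun e => hc2 (by rw [← e]; simp)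
      have := hAi g hg ⟨c, (mA c).2 hc1, (mA _).2 hc3⟩ (g⁻¹ p) ((mA _).2 (fun e => hc (by
        rw [inv_eq_iff_eq] at e; exact e.symm)))
      rw [mA] at this
      simp at this
    obtain ⟨a, ha, -⟩ := two p
    obtain ⟨b, hb, hba⟩ := two a
    have hF : ∀ i j k, i ≠ p → j ≠ p → k ≠ p → i ≠ j → i ≠ k → j ≠ k → c3 i j k ∈ stab φ x0 := by
      intro i j k hi hj hk h1 h2 h3
      exact (hA i ((mA i).2 hi) j ((mA j).2 hj) k ((mA k).2 hk) h1 h2 h3).2.2.2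
    have even : ∀ g : Perm (Fin n), g p = p → sign g = 1 → g ∈ stab φ x0 :=
      fun g => even_mem hF ha hb hba.symm
    set sg : Bool → ℤˣ := fun ε => if ε then -1 else 1 with hsg
    have exG : ∀ (j : Fin n) (ε : Bool), ∃ g : Perm (Fin n), g p = j ∧ sign g = sg ε := by
      intro j ε
      have key : ∀ f : Perm (Fin n), f p = j → ∃ g : Perm (Fin n), g p = j ∧ sign g = sg ε := by
        intro f hf
        by_cases c : sign f = sg ε
        · exact ⟨f, hf, c⟩
        · refine ⟨f * swap a b, ?_, ?_⟩
          · rw [mul_apply, swap_apply_of_ne_of_ne ha.symm hb.symm, hf]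
          · rw [map_mul, sign_swap hba.symm]
            simp only [hsg] at c ⊢
            rcases Int.units_eq_one_or (sign f) with e | e <;> rw [e] at c ⊢ <;> cases ε <;>
              simp_all
      exact key (swap p j) (swap_apply_left _ _)
    choose G hG1 hG2 using exG
    have prop : ∀ g ε, sign g = sg ε → φ g x0 = φ (G (g p) ε) x0 := by
      intro g ε hg
      have := even ((G (g p) ε)⁻¹ * g) (by rw [mul_apply, inv_eq_iff_eq, hG1])
        (by rw [map_mul, map_inv, hG2, hg]; simp)
      rw [mem_stab, map_mul, mul_apply, map_inv, inv_eq_iff_eq] at this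
      exact this
    have surj : Function.Surjective (fun q : Fin n × Bool => φ (G q.1 q.2) x0) := by
      intro x
      obtain ⟨g, rfl⟩ := htr x
      rcases Int.units_eq_one_or (sign g) with e | e
      · exact ⟨(g p, false), (prop g false (by simp [hsg, e])).symm⟩
      · exact ⟨(g p, true), (prop g true (by simp [hsg, e])).symm⟩
    have bij := (Fintype.bijective_iff_surjective_and_card _).2 ⟨surj, by simp [hX, mul_comm]⟩
    have hsn : ∀ ε, sg (!ε) = - sg ε := by intro ε; cases ε <;> simp [hsg]
    have act : ∀ i (hi : i + 1 < n) (k : Fin n) ε, s i (φ (G k ε) x0) =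
        φ (G (swap (⟨i, by omega⟩ : Fin n) ⟨i+1, hi⟩ k) (!ε)) x0 := by
      intro i hi k ε
      have ea : adj n i = swap (⟨i, by omega⟩ : Fin n) ⟨i+1, hi⟩ := by rw [adj, dif_pos hi]
      have := prop (adj n i * G k ε) (!ε) (by
        rw [map_mul, ea, sign_swap (by simp), hG2, hsn, neg_one_mul])
      rw [map_mul, hφ i hi, mul_apply, mul_apply, hG1, ea] at this
      exact this
    refine ⟨fun k ε => if hk : k < n then φ (G ⟨k, hk⟩ ε) x0 else x0, ?_, ?_⟩
    · intro j k ε δ hj hk e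
      simp only [dif_pos hj, dif_pos hk] at e
      have := bij.1 (a₁ := (⟨j, hj⟩, ε)) (a₂ := (⟨k, hk⟩, δ)) e
      simpa using this
    · intro i hi k hk ε
      have hi' : i < n := by omega
      simp only [dif_pos hk, dif_pos hi, dif_pos hi', Bool.true_xor]
      rw [act i hi]
      by_cases c1 : k = i
      · subst c1
        rw [if_pos rfl, swap_apply_left]
      · by_cases c2 : k = i + 1
        · subst c2
          rw [if_neg c1, if_pos rfl, swap_apply_right]
        · rw [if_neg c1, if_neg c2, swap_apply_of_ne_of_ne]
          · simpa using c1
          · simpa using c2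

end LinBr
end

section
open Equiv Equiv.Perm
namespace LinBr

theorem br_of_hom {n : ℕ} {G : Type} [Group G] (ψ : BraidGroup n →* G) :
    Br n (fun i => if h : i < n - 1 then ψ (σ ⟨i, h⟩) else 1) where
  comm i j hij hj := by
    have h1 : i < n - 1 := by omega
    have h2 : j < n - 1 := by omega
    simp only [dif_pos h1, dif_pos h2]
    rw [← map_mul, ← map_mul]
    congr 1
    have : (QuotientGroup.mk (FreeGroup.of (⟨i, h1⟩ : Fin (n-1)) * FreeGroup.of ⟨j, h2⟩ *
      (FreeGroup.of ⟨j, h2⟩ * FreeGroup.of ⟨i, h1⟩)⁻¹) : BraidGroup n) = 1 := by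
      apply PresentedGroup.one_of_mem
      exact Or.inl ⟨⟨i, h1⟩, ⟨j, h2⟩, Or.inl hij, rfl⟩
    rw [QuotientGroup.mk_mul, QuotientGroup.mk_inv, mul_inv_eq_one] at this
    exact this
  braid i hi := by
    have h1 : i < n - 1 := by omega
    have h2 : i + 1 < n - 1 := by omega
    simp only [dif_pos h1, dif_pos h2]
    rw [← map_mul, ← map_mul, ← map_mul, ← map_mul]
    congr 1
    have : (QuotientGroup.mk (FreeGroup.of (⟨i, h1⟩ : Fin (n-1)) * FreeGroup.of ⟨i+1, h2⟩ *
      FreeGroup.of ⟨i, h1⟩ *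
      (FreeGroup.of ⟨i+1, h2⟩ * FreeGroup.of ⟨i, h1⟩ * FreeGroup.of ⟨i+1, h2⟩)⁻¹) :
        BraidGroup n) = 1 := by
      apply PresentedGroup.one_of_mem
      exact Or.inr ⟨⟨i, h1⟩, ⟨i+1, h2⟩, rfl, rfl⟩
    rw [QuotientGroup.mk_mul, QuotientGroup.mk_inv, mul_inv_eq_one] at this
    exact this

theorem inv_of_trans {n k : ℕ} (ψ : BraidGroup n →* Perm (Fin k)) (hψ : IsTransitiveHom ψ)
    (Z : Set (Fin k)) (hZ : Z.Nonempty) (h : ∀ i, ∀ x ∈ Z, ψ (σ i) x ∈ Z) : Z = Set.univ := by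
  obtain ⟨z, hz⟩ := hZ
  have key : ∀ g : BraidGroup n, ∀ x ∈ Z, ψ g x ∈ Z := by
    intro g
    have hg : g ∈ Subgroup.closure (Set.range (PresentedGroup.of (rels := braidRels n))) := by
      rw [PresentedGroup.closure_range_of]; trivial
    induction hg using Subgroup.closure_induction with
    | mem x hx => obtain ⟨i, rfl⟩ := hx; exact h i
    | one => intro x hx; simpa using hx
    | mul a b _ _ ha hb => intro x hx; rw [map_mul, mul_apply]; exact ha _ (hb x hx)
    | inv a _ ha =>
      intro x hx
      have : (ψ a) '' Z = Z := by
        apply Set.eq_of_subset_of_ncard_le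
        · rintro _ ⟨y, hy, rfl⟩; exact ha y hy
        · rw [Set.ncard_image_of_injective _ (ψ a).injective]
        · exact Set.toFinite _
      rw [← this] at hx
      obtain ⟨y, hy, rfl⟩ := hx
      rw [map_inv]
      simpa using hy
  rw [Set.eq_univ_iff_forall]
  intro x
  obtain ⟨g, rfl⟩ := hψ z x
  exact key g z hz

end LinBr
end

/-- Lin. Let `n ≥ 7`. Every transitive homomorphism
`ψ : B_n → Sym_{2n}` is either cyclic or conjugate to one of the three Lin
homomorphisms `ρ_{L1}, ρ_{L2}, ρ_{L3}`. -/
theorem transitive_hom_to_sym2n_classification (n : ℕ) (hn : 7 ≤ n)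
    (ψ : BraidGroup n →* Equiv.Perm (Fin (2 * n))) (hψ : IsTransitiveHom ψ) :
    IsCyclicHom ψ ∨
      (∃ u : Equiv.Perm (Fin (2 * n)), ∀ i : Fin (n - 1), ψ (σ i) = u * linL1Gen n i * u⁻¹) ∨
      (∃ u : Equiv.Perm (Fin (2 * n)), ∀ i : Fin (n - 1), ψ (σ i) = u * linL2Gen n i * u⁻¹) ∨
      (∃ u : Equiv.Perm (Fin (2 * n)), ∀ i : Fin (n - 1), ψ (σ i) = u * linL3Gen n i * u⁻¹) := by
  have hb := LinBr.br_of_hom ψ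
  set s : ℕ → Equiv.Perm (Fin (2 * n)) := fun i => if h : i < n - 1 then ψ (σ ⟨i, h⟩) else 1 with hs
  have hsi : ∀ i : Fin (n - 1), s i = ψ (σ i) := fun i => dif_pos i.2
  have hX : Fintype.card (Fin (2 * n)) = 2 * n := Fintype.card_fin _
  have hT : ∀ Z : Set (Fin (2 * n)), Z.Nonempty →
      (∀ i, i + 1 < n → ∀ x ∈ Z, s i x ∈ Z) → Z = Set.univ := by
    intro Z hZ h
    refine LinBr.inv_of_trans ψ hψ Z hZ (fun i x hx => ?_)
    rw [← hsi]
    exact h i (by omega) x hx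
  have hcyc : (∀ i j, i + 1 < n → j + 1 < n → s i = s j) → IsCyclicHom ψ := by
    intro h i j
    rw [← hsi, ← hsi]
    exact h i j (by omega) (by omega)
  by_cases hsq : ∃ x, s 0 (s 0 x) ≠ x
  · rcases LinBr.caseII hn hX hb hT hsq with h | ⟨e, he, hr⟩ | ⟨e, he, hr⟩
    · exact Or.inl (hcyc h)
    · obtain ⟨u, hu⟩ := LinBr.conj_of_lab he (linL1Gen n) false false
        (fun i hi k ε => by simpa using LinBr.L1_pt i hi k ε) hr
      exact Or.inr (Or.inl ⟨u, fun i => by rw [← hsi]; exact hu i⟩)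
    · obtain ⟨u, hu⟩ := LinBr.conj_of_lab he (linL2Gen n) false true
        (fun i hi k ε => by simpa using LinBr.L2_pt i hi k ε) hr
      exact Or.inr (Or.inr (Or.inl ⟨u, fun i => by rw [← hsi]; exact hu i⟩))
  · push Not at hsq
    rcases LinBr.caseI hn hX hb hT hsq with h | ⟨e, he, hr⟩
    · exact Or.inl (hcyc h)
    · obtain ⟨u, hu⟩ := LinBr.conj_of_lab he (linL3Gen n) true true
        (fun i hi k ε => by simpa using LinBr.L3_pt i hi k ε) hr
      exact Or.inr (Or.inr (Or.inr ⟨u, fun i => by rw [← hsi]; exact hu i⟩))
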